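/- For $\alpha,\beta\in\mathbb R$ let $w_{\alpha,\beta}(x):=(1+x)^\alpha(1-x)^\beta$ and $\varphi(x):=(1-x^2)^{1/2}$; $\|\cdot\|_p$ is the $L^p$ norm on $[-1,1]$ (essential supremum if $p=\infty$), and $1/p:=0$ if $p=\infty$. Let $W_p^{\alpha,\beta}$ be the set of measurable $f:[-1,1]\to\mathbb R$ with $\|w_{\alpha,\beta}f\|_p<\infty$. Put $\Delta_h^k(f,x):=\sum_{i=0}^k\binom ki(-1)^{k-i}f(x-kh/2+ih)$ if $x\pm kh/2\in[-1,1]$ and $\Delta_h^k(f,x):=0$ otherwise; $\overrightarrow\Delta_h^k(f,x):=\Delta_h^k(f,x+kh/2)$, $\overleftarrow\Delta_h^k(f,x):=\Delta_h^k(f,x-kh/2)$. For a weight $w$ the weighted Ditzian–Totik modulus is $$\omega_\varphi^k(f,\delta)_{w,p}:=\sup_{0<h\le\delta}\|w\,\Delta_{h\varphi(\cdot)}^k(f,\cdot)\|_{L^p[-1+2k^2h^2,\,1-2k^2h^2]}+\sup_{0<h\le2k^2\delta^2}\|w\overrightarrow\Delta_h^k(f,\cdot)\|_{L^p[-1,\,-1+2k^2\delta^2]}+\sup_{0<h\le2k^2\delta^2}\|w\overleftarrow\Delta_h^k(f,\cdot)\|_{L^p[1-2k^2\delta^2,\,1]}.$$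 Let $M_+^k$ be the set of functions $f$ with $f=0$ on $(-1,0]$ all of whose $k$th divided differences $[x_0,\dots,x_k;f]$ over $k+1$ distinct points of $(-1,1)$ are nonnegative. Let $k\in\mathbb N=\{1,2,\dots\}$, $\beta\in\mathbb R$, $1\le p\le\infty$, and let $\delta_0$ satisfy $\delta_0\le\frac1{2k}$ and $\delta_0<\frac1{k\sqrt{k+1}}$ (for $k=1$ and $k=2$ the value $\delta_0=\frac1{2k}$ is allowed). Then there is a constant $c>0$, depending only on $k,p,\beta$ and $\delta_0$, such that for all $f\in M_+^k\cap W_p^{\beta,\beta}$ and all $0<\delta\le\delta_0$, $$\omega_\varphi^k(f,\delta)_{w_{\beta,\beta},1}\le c\,\|w_{\beta,\beta}f\|_p\,\Phi(\delta),$$ where $$\Phi(\delta):=\begin{cases}\delta^{2-2/p},&\text{if }k\ge3,\text{ or }k=2\text{ and }1\le p<\infty,\text{ or }k=1\text{ and }1\le p<2,\\ \delta^2|\ln\delta|,&\text{if }k=2\text{ and }p=\infty,\\ \delta\sqrt{|\ln\delta|},&\text{if }k=1\text{ and }p=2,\\ \delta,&\text{if }k=1\text{ and }2<p\le\infty.\end{cases}$$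 -/

import Mathlib

open MeasureTheory Set
open scoped ENNReal

noncomputable section

/-- The Jacobi weight `w_{α,β}(x) = (1+x)^α (1-x)^β`. -/
def jacobi (α β : ℝ) (x : ℝ) : ℝ := (1 + x) ^ α * (1 - x) ^ β

/-- `φ(x) = √(1-x²)`. -/
def phiW (x : ℝ) : ℝ := Real.sqrt (1 - x ^ 2)

/-- The `L^p` norm of `g` on the interval `[a,b]` (essential sup when `p = ∞`). -/
def LpOn (g : ℝ → ℝ) (p : ℝ≥0∞) (a b : ℝ) : ℝ≥0∞ :=
  eLpNorm g p (volume.restrict (Icc a b))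

/-- The `k`-th symmetric difference `Δ_h^k(f,x)` relative to `[-1,1]`. -/
def symmDelta (k : ℕ) (h : ℝ) (f : ℝ → ℝ) (x : ℝ) : ℝ :=
  if (x - k * h / 2 ∈ Icc (-1 : ℝ) 1 ∧ x + k * h / 2 ∈ Icc (-1 : ℝ) 1) then
    ∑ i ∈ Finset.range (k + 1), ((k.choose i : ℝ) * (-1 : ℝ) ^ (k - i) * f (x - k * h / 2 + i * h))
  else 0

/-- Main-part weighted modulus `Ω_φ^k(f,δ)_{w,p}`. -/
def OmegaMain (k : ℕ) (f : ℝ → ℝ) (δ : ℝ) (wt : ℝ → ℝ) (p : ℝ≥0∞) : ℝ≥0∞ :=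
  ⨆ h ∈ Ioc (0 : ℝ) δ,
    LpOn (fun x => wt x * symmDelta k (h * phiW x) f x) p
      (-1 + 2 * (k : ℝ) ^ 2 * h ^ 2) (1 - 2 * (k : ℝ) ^ 2 * h ^ 2)

/-- Forward part `Ω→_φ^k(f,δ)_{w,p}`. -/
def OmegaFwd (k : ℕ) (f : ℝ → ℝ) (δ : ℝ) (wt : ℝ → ℝ) (p : ℝ≥0∞) : ℝ≥0∞ :=
  ⨆ h ∈ Ioc (0 : ℝ) (2 * (k : ℝ) ^ 2 * δ ^ 2),
    LpOn (fun x => wt x * symmDelta k h f (x + k * h / 2)) p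
      (-1) (-1 + 2 * (k : ℝ) ^ 2 * δ ^ 2)

/-- Backward part `Ω←_φ^k(f,δ)_{w,p}`. -/
def OmegaBwd (k : ℕ) (f : ℝ → ℝ) (δ : ℝ) (wt : ℝ → ℝ) (p : ℝ≥0∞) : ℝ≥0∞ :=
  ⨆ h ∈ Ioc (0 : ℝ) (2 * (k : ℝ) ^ 2 * δ ^ 2),
    LpOn (fun x => wt x * symmDelta k h f (x - k * h / 2)) p
      (1 - 2 * (k : ℝ) ^ 2 * δ ^ 2) 1

/-- Weighted Ditzian–Totik modulus `ω_φ^k(f,δ)_{w,p}`. -/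
def omegaDT (k : ℕ) (f : ℝ → ℝ) (δ : ℝ) (wt : ℝ → ℝ) (p : ℝ≥0∞) : ℝ≥0∞ :=
  OmegaMain k f δ wt p + OmegaFwd k f δ wt p + OmegaBwd k f δ wt p

/-- `f` is `k`-monotone on `(-1,1)`: all `k`-th divided differences over `k+1` distinct
points of `(-1,1)` are nonnegative. -/
def kMonotoneOn (k : ℕ) (f : ℝ → ℝ) : Prop :=
  ∀ x : Fin (k + 1) → ℝ, Function.Injective x → (∀ i, x i ∈ Ioo (-1 : ℝ) 1) →
    0 ≤ ∑ i, f (x i) / ∏ j ∈ Finset.univ.erase i, (x i - x j)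

/-- `M_+^k`, the `k`-monotone functions on `(-1,1)` vanishing on `(-1,0]`. -/
def MPlus (k : ℕ) : Set (ℝ → ℝ) :=
  {f | kMonotoneOn k f ∧ ∀ x : ℝ, -1 < x → x ≤ 0 → f x = 0}

/-- `W_p^{α,β}`. A function on `[-1,1]` is given by a function on `ℝ` whose values outside
`[-1,1]` are irrelevant. -/
def WSet (p : ℝ≥0∞) (α β : ℝ) : Set (ℝ → ℝ) :=
  {f | AEMeasurable f (volume.restrict (Icc (-1 : ℝ) 1)) ∧
    LpOn (fun x => jacobi α β x * f x) p (-1) 1 < ⊤}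

/-- The rate `Φ(δ)`. The last branch covers `k ≥ 3`, `k = 2` with `p < ∞`, and `k = 1` with
`p < 2`; there `2 / p.toReal` is `0` for `p = ∞`. -/
def rateFn (k : ℕ) (p : ℝ≥0∞) (δ : ℝ) : ℝ :=
  open Classical in
  if k = 2 ∧ p = ⊤ then δ ^ 2 * |Real.log δ|
  else if k = 1 ∧ p = 2 then δ * Real.sqrt |Real.log δ|
  else if k = 1 ∧ 2 < p then δ
  else δ ^ (2 - 2 / p.toReal)

end

theorem prod_range_erase_natCast_sub (i d : ℕ) :
    ∏ j ∈ (Finset.range (i + d + 1)).erase i, ((i : ℝ) - j) =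
      (-1) ^ d * (i.factorial * d.factorial) := by
  induction d with
  | zero =>
    have : (Finset.range (i + 0 + 1)).erase i = Finset.range i := by
      ext j; simp; omega
    rw [this, ← Finset.prod_range_reflect, ← Finset.prod_range_add_one_eq_factorial]
    push_cast
    simp only [pow_zero, one_mul, Nat.factorial_zero, Nat.cast_one, mul_one]
    refine Finset.prod_congr rfl fun j hj => ?_
    have hj' := Finset.mem_range.1 hj
    rw [Nat.cast_sub (by omega), Nat.cast_sub (by omega)]
    push_cast; ring
  | succ d ih =>
    have : (Finset.range (i + (d + 1) + 1)).erase i =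
        insert (i + d + 1) ((Finset.range (i + d + 1)).erase i) := by
      ext j; simp; omega
    rw [this, Finset.prod_insert (by simp), ih, Nat.factorial_succ]
    push_cast; ring

/-- Equispaced differences of a `k`-monotone function are nonnegative. -/
theorem kMonotoneOn.fwdDiff_iter_nonneg {k : ℕ} {f : ℝ → ℝ} (hf : kMonotoneOn k f) {η y : ℝ}
    (hη : 0 < η) (hy : -1 < y) (hy' : y + k * η < 1) : 0 ≤ (fwdDiff η)^[k] f y := by
  have h := hf (fun i => y + (i : ℕ) * η)
    (fun i j hij => by
      have : ((i : ℕ) : ℝ) = (j : ℕ) := by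
        have h2 : ((i : ℕ) : ℝ) * η = (j : ℕ) * η := by simpa using hij
        exact mul_right_cancel₀ hη.ne' h2
      exact Fin.ext (by exact_mod_cast this))
    (fun i => by
      have h1 : ((i : ℕ) : ℝ) ≤ k := by exact_mod_cast Nat.lt_succ_iff.1 i.2
      have h0 : (0 : ℝ) ≤ (i : ℕ) := Nat.cast_nonneg _
      exact ⟨by nlinarith, by nlinarith⟩)
  have hprod : ∀ i : Fin (k + 1), ∏ j ∈ Finset.univ.erase i,
      ((y + ((i : ℕ) : ℝ) * η) - (y + ((j : ℕ) : ℝ) * η)) =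
      η ^ k * ((-1) ^ (k - (i : ℕ)) * ((i : ℕ).factorial * (k - (i : ℕ)).factorial)) := by
    intro i
    have hi : (i : ℕ) + (k - (i : ℕ)) = k := by have := i.2; omega
    have h1 := prod_range_erase_natCast_sub (i : ℕ) (k - (i : ℕ))
    rw [hi] at h1
    rw [← h1]
    have h2 : ∏ j ∈ Finset.univ.erase i, (((i : ℕ) : ℝ) - ((j : ℕ) : ℝ)) =
        ∏ j ∈ (Finset.range (k + 1)).erase (i : ℕ), (((i : ℕ) : ℝ) - (j : ℝ)) := by
      refine Finset.prod_bij (fun (j : Fin (k + 1)) _ => (j : ℕ)) ?_ ?_ ?_ ?_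
      · intro j hj
        simp only [Finset.mem_erase, Finset.mem_univ, and_true] at hj
        simp only [Finset.mem_erase, Finset.mem_range]
        exact ⟨fun h => hj (Fin.ext h), j.2⟩
      · intro a _ b _ h; exact Fin.ext h
      · intro b hb
        simp only [Finset.mem_erase, Finset.mem_range] at hb
        exact ⟨⟨b, hb.2⟩, by simp [Fin.ext_iff, hb.1], rfl⟩
      · intros; rfl
    rw [← h2]
    have h3 : ∀ j : Fin (k + 1), (y + ((i : ℕ) : ℝ) * η) - (y + ((j : ℕ) : ℝ) * η) =
        η * (((i : ℕ) : ℝ) - ((j : ℕ) : ℝ)) := fun j => by ring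
    simp only [h3, Finset.prod_mul_distrib, Finset.prod_const, Finset.card_erase_of_mem
      (Finset.mem_univ i), Finset.card_univ, Fintype.card_fin, Nat.add_sub_cancel]
  simp only [hprod] at h
  rw [fwdDiff_iter_eq_sum_shift, Finset.sum_range]
  have hpos : (0 : ℝ) < k.factorial * η ^ k := by positivity
  have := mul_nonneg hpos.le h
  rw [Finset.mul_sum] at this
  refine this.trans_eq (Finset.sum_congr rfl fun i _ => ?_)
  have hi : (i : ℕ) ≤ k := Nat.lt_succ_iff.1 i.2
  have hc := Nat.choose_mul_factorial_mul_factorial hi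
  have hc' : (k.choose (i : ℕ) : ℝ) * (i : ℕ).factorial * (k - (i : ℕ)).factorial = k.factorial := by
    exact_mod_cast hc
  rw [← hc']
  simp only [zsmul_eq_mul, nsmul_eq_mul]
  push_cast
  rcases neg_one_pow_eq_or ℝ (k - (i : ℕ)) with h1 | h1 <;> rw [h1] <;> field_simp

theorem MPlus.nonneg {n : ℕ} {f : ℝ → ℝ} (hf : f ∈ MPlus (n + 1)) {b : ℝ} (hb : -1 < b)
    (hb1 : b < 1) : 0 ≤ f b := by
  rcases le_or_gt b 0 with h0 | h0
  · rw [hf.2 b hb h0]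
  have hmem : ∀ j : Fin (n + 1), -1 < -((j : ℕ) : ℝ) / (n + 1) ∧ -((j : ℕ) : ℝ) / (n + 1) ≤ 0 := by
    intro j
    have h1 : ((j : ℕ) : ℝ) < n + 1 := by exact_mod_cast j.2
    have hn : (0 : ℝ) < n + 1 := by positivity
    constructor
    · rw [lt_div_iff₀ hn]; linarith
    · exact div_nonpos_of_nonpos_of_nonneg (by simp) hn.le
  have hinj : ∀ i j : Fin (n + 1), -((i : ℕ) : ℝ) / (n + 1) = -((j : ℕ) : ℝ) / (n + 1) → i = j := by
    intro i j h
    have hn : (n + 1 : ℝ) ≠ 0 := by positivity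
    field_simp at h
    exact Fin.ext (by exact_mod_cast neg_injective h)
  have h := hf.1 (Fin.snoc (α := fun _ => ℝ) (fun j : Fin (n + 1) => -((j : ℕ) : ℝ) / (n + 1)) b)
    (by
      intro i j
      refine Fin.lastCases ?_ (fun i => ?_) i <;> refine Fin.lastCases ?_ (fun j => ?_) j
      · simp
      · simp only [Fin.snoc_last, Fin.snoc_castSucc]
        intro h; have := (hmem j).2; linarith
      · simp only [Fin.snoc_last, Fin.snoc_castSucc]
        intro h; have := (hmem i).2; linarith
      · simp only [Fin.snoc_castSucc]
        intro h; rw [hinj i j h])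
    (by
      intro i
      refine Fin.lastCases ?_ (fun i => ?_) i
      · simp only [Fin.snoc_last]; exact ⟨hb, hb1⟩
      · simp only [Fin.snoc_castSucc]; exact ⟨(hmem i).1, by have := (hmem i).2; linarith⟩)
  rw [Fin.sum_univ_castSucc, Finset.sum_eq_zero, zero_add] at h
  · simp only [Fin.snoc_last] at h
    have hp : 0 < ∏ j ∈ Finset.univ.erase (Fin.last (n + 1)), (b - (Fin.snoc (α := fun _ => ℝ)
        (fun j : Fin (n + 1) => -((j : ℕ) : ℝ) / (n + 1)) b : Fin (n + 2) → ℝ) j) := by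
      refine Finset.prod_pos fun j => ?_
      refine Fin.lastCases ?_ (fun j => ?_) j
      · simp
      · intro _; simp only [Fin.snoc_castSucc]; have := (hmem j).2; linarith
    by_contra hneg
    exact absurd h (not_le.2 (div_neg_of_neg_of_pos (not_le.1 hneg) hp))
  · intro i _
    simp only [Fin.snoc_castSucc]
    rw [hf.2 _ (hmem i).1 (hmem i).2, zero_div]

theorem MPlus.mono {n : ℕ} {f : ℝ → ℝ} (hf : f ∈ MPlus (n + 1)) {a b : ℝ} (ha : -1 < a)
    (hab : a ≤ b) (hb1 : b < 1) : f a ≤ f b := by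
  rcases hab.eq_or_lt with rfl | hab
  · exact le_rfl
  rcases le_or_gt a 0 with h0 | h0
  · rw [hf.2 a ha h0]; exact MPlus.nonneg hf (ha.trans hab) hb1
  have hn : (0 : ℝ) < n + 1 := by positivity
  have hmem : ∀ j : Fin n, -1 < -((j : ℕ) : ℝ) / (n + 1) ∧ -((j : ℕ) : ℝ) / (n + 1) ≤ 0 := by
    intro j
    have h1 : ((j : ℕ) : ℝ) < n := by exact_mod_cast j.2
    constructor
    · rw [lt_div_iff₀ hn]; linarith
    · exact div_nonpos_of_nonpos_of_nonneg (by simp) hn.le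
  have hinj : ∀ i j : Fin n, -((i : ℕ) : ℝ) / (n + 1) = -((j : ℕ) : ℝ) / (n + 1) → i = j := by
    intro i j h
    field_simp at h
    exact Fin.ext (by exact_mod_cast neg_injective h)
  set x : Fin (n + 2) → ℝ := Fin.cons b (Fin.cons a (fun j : Fin n => -((j : ℕ) : ℝ) / (n + 1)))
    with hx
  have x0 : x 0 = b := rfl
  have x1 : x (Fin.succ 0) = a := rfl
  have x2 : ∀ j : Fin n, x j.succ.succ = -((j : ℕ) : ℝ) / (n + 1) := fun j => rfl
  have hxi : Function.Injective x := by
    rw [hx, Fin.cons_injective_iff, Fin.cons_injective_iff]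
    refine ⟨?_, ?_, fun i j h => hinj i j h⟩
    · rintro ⟨j, hj⟩
      revert hj
      refine Fin.cases ?_ (fun j => ?_) j
      · intro h; simp only [Fin.cons_zero] at h; linarith
      · intro h; simp only [Fin.cons_succ] at h; have := (hmem j).2; linarith
    · rintro ⟨j, hj⟩; have := (hmem j).2; linarith
  have h := hf.1 x hxi (by
    intro i
    refine Fin.cases ?_ (fun i => Fin.cases ?_ (fun i => ?_) i) i
    · rw [x0]; exact ⟨by linarith, hb1⟩
    · rw [x1]; exact ⟨ha, by linarith⟩
    · rw [x2]; exact ⟨(hmem i).1, by have := (hmem i).2; linarith⟩)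
  rw [Fin.sum_univ_succ, Fin.sum_univ_succ, Finset.sum_eq_zero, add_zero] at h
  · have e0 : ∏ j ∈ Finset.univ.erase (0 : Fin (n + 2)), (x 0 - x j) =
        (b - a) * ∏ j : Fin n, (b + ((j : ℕ) : ℝ) / (n + 1)) := by
      have : Finset.univ.erase (0 : Fin (n + 2)) = Finset.univ.map (Fin.succEmb _) := by
        ext j; refine Fin.cases ?_ (fun j => ?_) j <;> simp
      rw [this, Finset.prod_map, Fin.prod_univ_succ]
      simp only [Fin.coe_succEmb, x0, x1, x2]
      congr 1
      exact Finset.prod_congr rfl fun j _ => by ring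
    have e1 : ∏ j ∈ Finset.univ.erase (Fin.succ 0 : Fin (n + 2)), (x (Fin.succ 0) - x j) =
        (a - b) * ∏ j : Fin n, (a + ((j : ℕ) : ℝ) / (n + 1)) := by
      have : Finset.univ.erase (Fin.succ 0 : Fin (n + 2)) = insert 0
          (Finset.univ.map ((Fin.succEmb n).trans (Fin.succEmb (n + 1)))) := by
        ext j; refine Fin.cases ?_ (fun j => Fin.cases ?_ (fun j => ?_) j) j
        · simp
        · simp [Fin.ext_iff]
        · simp [Fin.ext_iff]
      rw [this, Finset.prod_insert (by simp), Finset.prod_map]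
      simp only [Function.Embedding.trans_apply, Fin.coe_succEmb, x0, x1, x2]
      congr 1
      exact Finset.prod_congr rfl fun j _ => by ring
    rw [e0, e1, x0, x1] at h
    have hj : ∀ j : Fin n, (0 : ℝ) ≤ ((j : ℕ) : ℝ) / (n + 1) := fun j => by positivity
    have hA : 0 < ∏ j : Fin n, (a + ((j : ℕ) : ℝ) / (n + 1)) :=
      Finset.prod_pos fun j _ => by have := hj j; linarith
    have hAB : ∏ j : Fin n, (a + ((j : ℕ) : ℝ) / (n + 1)) ≤
        ∏ j : Fin n, (b + ((j : ℕ) : ℝ) / (n + 1)) :=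
      Finset.prod_le_prod (fun j _ => by have := hj j; linarith) (fun j _ => by linarith)
    set A := ∏ j : Fin n, (a + ((j : ℕ) : ℝ) / (n + 1))
    set B := ∏ j : Fin n, (b + ((j : ℕ) : ℝ) / (n + 1))
    have hB : 0 < B := hA.trans_le hAB
    have hba : 0 < b - a := by linarith
    have e : f b / ((b - a) * B) + f a / ((a - b) * A) = (f b * A - f a * B) / ((b - a) * B * A) := by
      have : a - b ≠ 0 := by linarith
      field_simp
      ring
    rw [e] at h
    have h2 : 0 ≤ f b * A - f a * B := by
      by_contra hneg
      exact absurd h (not_le.2 (div_neg_of_neg_of_pos (not_le.1 hneg) (by positivity)))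
    have hfa : 0 ≤ f a := MPlus.nonneg hf ha (hab.trans hb1)
    have h3 : f a * A ≤ f b * A := by nlinarith
    exact le_of_mul_le_mul_right h3 hA
  · intro i _
    rw [x2, hf.2 _ (hmem i).1 (hmem i).2, zero_div]

theorem symmDelta_eq_fwdDiff_iter {k : ℕ} {η x : ℝ} (f : ℝ → ℝ)
    (h1 : x - k * η / 2 ∈ Icc (-1 : ℝ) 1) (h2 : x + k * η / 2 ∈ Icc (-1 : ℝ) 1) :
    symmDelta k η f x = (fwdDiff η)^[k] f (x - k * η / 2) := by
  rw [symmDelta, if_pos ⟨h1, h2⟩, fwdDiff_iter_eq_sum_shift]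
  refine Finset.sum_congr rfl fun i _ => ?_
  simp only [zsmul_eq_mul, nsmul_eq_mul]
  push_cast
  ring

noncomputable section

/-- The Steklov average of `u` over `[x - ε, x]`. -/
def stek (ε : ℝ) (u : ℝ → ℝ) (x : ℝ) : ℝ := ε⁻¹ * ∫ t in (x - ε)..x, u t

/-- The backward difference quotient of `u` with step `ε`. -/
def bquot (ε : ℝ) (u : ℝ → ℝ) (x : ℝ) : ℝ := ε⁻¹ * (u x - u (x - ε))

end

section Steklov

variable {ε : ℝ} {u : ℝ → ℝ}

theorem stek_mono (hε : 0 < ε) (hu : Monotone u) : Monotone (stek ε u) := by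
  intro x y hxy
  have e : ∀ x, stek ε u x = ε⁻¹ * ∫ t in (0 : ℝ)..ε, u (t + (x - ε)) := by
    intro x
    rw [intervalIntegral.integral_comp_add_right (fun t => u t) (x - ε), stek]
    simp
  rw [e, e]
  refine mul_le_mul_of_nonneg_left ?_ (inv_nonneg.2 hε.le)
  refine intervalIntegral.integral_mono_on hε.le ?_ ?_ ?_
  · exact Monotone.intervalIntegrable fun a b h => hu (by linarith)
  · exact Monotone.intervalIntegrable fun a b h => hu (by linarith)
  · intro t _; exact hu (by linarith)

theorem stek_le (hε : 0 < ε) (hu : Monotone u) (x : ℝ) : stek ε u x ≤ u x := by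
  have h : ∫ t in (x - ε)..x, u t ≤ ∫ t in (x - ε)..x, u x :=
    intervalIntegral.integral_mono_on (by linarith) hu.intervalIntegrable (by simp)
      fun t ht => hu ht.2
  rw [intervalIntegral.integral_const, smul_eq_mul] at h
  rw [stek, inv_mul_le_iff₀ hε]
  linarith

theorem le_stek (hε : 0 < ε) (hu : Monotone u) (x : ℝ) : u (x - ε) ≤ stek ε u x := by
  have h : ∫ t in (x - ε)..x, u (x - ε) ≤ ∫ t in (x - ε)..x, u t :=
    intervalIntegral.integral_mono_on (by linarith) (by simp) hu.intervalIntegrable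
      fun t ht => hu ht.1
  rw [intervalIntegral.integral_const, smul_eq_mul] at h
  rw [stek, le_inv_mul_iff₀ hε]
  linarith

theorem stek_iter_mono (hε : 0 < ε) (hu : Monotone u) (j : ℕ) : Monotone ((stek ε)^[j] u) := by
  induction j with
  | zero => exact hu
  | succ j ih => rw [Function.iterate_succ_apply']; exact stek_mono hε ih

theorem stek_iter_le (hε : 0 < ε) (hu : Monotone u) (j : ℕ) (x : ℝ) :
    (stek ε)^[j] u x ≤ u x := by
  induction j generalizing x with
  | zero => exact le_rfl
  | succ j ih =>
    rw [Function.iterate_succ_apply']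
    exact (stek_le hε (stek_iter_mono hε hu j) x).trans (ih x)

theorem le_stek_iter (hε : 0 < ε) (hu : Monotone u) (j : ℕ) (x : ℝ) :
    u (x - j * ε) ≤ (stek ε)^[j] u x := by
  induction j generalizing x with
  | zero => simp
  | succ j ih =>
    rw [Function.iterate_succ_apply']
    refine le_trans ?_ (le_stek hε (stek_iter_mono hε hu j) x)
    refine (ih (x - ε)).trans_eq' ?_
    congr 1; push_cast; ring

theorem stek_continuous (hu : ∀ a b, IntervalIntegrable u volume a b) :
    Continuous (stek ε u) := by
  have h0 : Continuous fun x => ∫ t in (0 : ℝ)..x, u t :=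
    intervalIntegral.continuous_primitive hu 0
  have e : stek ε u = fun x => ε⁻¹ * ((∫ t in (0 : ℝ)..x, u t) - ∫ t in (0 : ℝ)..(x - ε), u t) := by
    funext x
    rw [intervalIntegral.integral_interval_sub_left (hu _ _) (hu _ _), stek]
  rw [e]
  exact continuous_const.mul (h0.sub (h0.comp (continuous_id.sub continuous_const)))

theorem stek_iter_continuous (hu : Continuous u) (j : ℕ) : Continuous ((stek ε)^[j] u) := by
  induction j with
  | zero => exact hu
  | succ j ih =>
    rw [Function.iterate_succ_apply']; exact stek_continuous fun a b => ih.intervalIntegrable a b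

theorem bquot_continuous (hu : Continuous u) : Continuous (bquot ε u) := by
  unfold bquot; fun_prop

theorem bquot_iter_continuous (hu : Continuous u) (j : ℕ) : Continuous ((bquot ε)^[j] u) := by
  induction j with
  | zero => exact hu
  | succ j ih => rw [Function.iterate_succ_apply']; exact bquot_continuous ih

theorem hasDerivAt_stek (hu : Continuous u) (x : ℝ) : HasDerivAt (stek ε u) (bquot ε u x) x := by
  have h0 : ∀ x, HasDerivAt (fun x => ∫ t in (0 : ℝ)..x, u t) (u x) x := fun x =>
    intervalIntegral.integral_hasDerivAt_right (hu.intervalIntegrable _ _)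
      (hu.stronglyMeasurableAtFilter _ _) hu.continuousAt
  have e : stek ε u = fun x => ε⁻¹ * ((∫ t in (0 : ℝ)..x, u t) - ∫ t in (0 : ℝ)..(x - ε), u t) := by
    funext x
    rw [intervalIntegral.integral_interval_sub_left (hu.intervalIntegrable _ _)
      (hu.intervalIntegrable _ _), stek]
  rw [e]
  exact ((h0 x).sub ((h0 (x - ε)).comp_sub_const x ε)).const_mul ε⁻¹

theorem hasDerivAt_bquot_iter {u' : ℝ → ℝ} (h : ∀ x, HasDerivAt u (u' x) x) (j : ℕ) (x : ℝ) :
    HasDerivAt ((bquot ε)^[j] u) ((bquot ε)^[j] u' x) x := by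
  induction j generalizing x with
  | zero => exact h x
  | succ j ih =>
    rw [Function.iterate_succ_apply', Function.iterate_succ_apply']
    exact ((ih x).sub ((ih (x - ε)).comp_sub_const x ε)).const_mul ε⁻¹

theorem stek_iter_eq_zero (hε : 0 < ε) {a : ℝ} (h : ∀ x ≤ a, u x = 0) (j : ℕ) :
    ∀ x ≤ a, (stek ε)^[j] u x = 0 := by
  induction j with
  | zero => exact h
  | succ j ih =>
    intro x hx
    rw [Function.iterate_succ_apply', stek, intervalIntegral.integral_congr (g := fun _ => 0)]
    · simp
    · intro t ht
      rw [uIcc_of_le (by linarith)] at ht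
      exact ih t (ht.2.trans hx)

theorem bquot_iter_eq_zero (hε : 0 < ε) {a : ℝ} (h : ∀ x ≤ a, u x = 0) (j : ℕ) :
    ∀ x ≤ a, (bquot ε)^[j] u x = 0 := by
  induction j with
  | zero => exact h
  | succ j ih =>
    intro x hx
    rw [Function.iterate_succ_apply', bquot, ih x hx, ih _ (by linarith)]
    simp

theorem bquot_iter_intervalIntegrable (hu : ∀ a b, IntervalIntegrable u volume a b) (j : ℕ) :
    ∀ a b, IntervalIntegrable ((bquot ε)^[j] u) volume a b := by
  induction j with
  | zero => exact hu
  | succ j ih =>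
    intro a b
    rw [Function.iterate_succ_apply']
    have h2 : IntervalIntegrable (fun x => (bquot ε)^[j] u (x - ε)) volume a b := by
      have := (ih (a - ε) (b - ε)).comp_sub_right ε
      simpa using this
    exact ((ih a b).sub h2).const_mul ε⁻¹

theorem bquot_stek (hu : ∀ a b, IntervalIntegrable u volume a b) :
    bquot ε (stek ε u) = stek ε (bquot ε u) := by
  funext x
  have h2 : IntervalIntegrable (fun t => u (t - ε)) volume (x - ε) x := by
    have := (hu (x - ε - ε) (x - ε)).comp_sub_right ε
    simpa using this
  have e : ∫ t in (x - ε)..x, bquot ε u t =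
      ε⁻¹ * ((∫ t in (x - ε)..x, u t) - ∫ t in (x - ε - ε)..(x - ε), u t) := by
    simp only [bquot]
    rw [intervalIntegral.integral_const_mul, intervalIntegral.integral_sub (hu _ _) h2,
      intervalIntegral.integral_comp_sub_right (fun t => u t)]
  rw [stek, e, bquot, stek, stek]
  ring

theorem bquot_iter_stek (hu : ∀ a b, IntervalIntegrable u volume a b) (j : ℕ) :
    (bquot ε)^[j] (stek ε u) = stek ε ((bquot ε)^[j] u) := by
  induction j with
  | zero => rfl
  | succ j ih =>
    rw [Function.iterate_succ_apply', ih, bquot_stek (bquot_iter_intervalIntegrable hu j),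
      Function.iterate_succ_apply']

theorem bquot_iter_eq_fwdDiff (j : ℕ) (x : ℝ) :
    (bquot ε)^[j] u x = (ε⁻¹) ^ j * (fwdDiff ε)^[j] u (x - j * ε) := by
  induction j generalizing x with
  | zero => simp
  | succ j ih =>
    rw [Function.iterate_succ_apply', bquot, ih, ih, Function.iterate_succ_apply', fwdDiff,
      pow_succ]
    have e1 : x - ((j + 1 : ℕ) : ℝ) * ε + ε = x - j * ε := by push_cast; ring
    have e2 : x - ((j + 1 : ℕ) : ℝ) * ε = x - ε - j * ε := by push_cast; ring
    rw [e1, e2]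
    ring

theorem stek_nonneg (hε : 0 < ε) {x : ℝ} (h : ∀ t ≤ x, 0 ≤ u t) : 0 ≤ stek ε u x :=
  mul_nonneg (inv_nonneg.2 hε.le)
    (intervalIntegral.integral_nonneg (by linarith) fun t ht => h t ht.2)

end Steklov

/-- `G 0, …, G k` are the successive derivatives of `G 0`; they vanish on `(-∞,0]` and the last
one is continuous, and nonnegative on `(-∞,b]`. -/
structure DerivChain (k : ℕ) (b : ℝ) (G : ℕ → ℝ → ℝ) : Prop where
  deriv : ∀ j < k, ∀ x, HasDerivAt (G j) (G (j + 1) x) x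
  cont : Continuous (G k)
  zero : ∀ j ≤ k, ∀ x ≤ 0, G j x = 0
  nonneg : ∀ x ≤ b, 0 ≤ G k x

noncomputable section

/-- The function that vanishes on `(-∞,0]`, equals `f` on `(0,b]` and is constant on `[b,∞)`. -/
def cutoff (f : ℝ → ℝ) (b x : ℝ) : ℝ := if x ≤ 0 then 0 else f (min x b)

end

theorem cutoff_mono {n : ℕ} {f : ℝ → ℝ} (hf : f ∈ MPlus (n + 1)) {b : ℝ} (hb : 0 < b)
    (hb1 : b < 1) : Monotone (cutoff f b) := by
  intro x y hxy
  unfold cutoff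
  split_ifs with h1 h2 h2
  · exact le_rfl
  · have : 0 < min y b := lt_min (not_le.1 h2) hb
    exact MPlus.nonneg hf (by linarith) ((min_le_right _ _).trans_lt hb1)
  · exact absurd (hxy.trans h2) h1
  · have : 0 < min x b := lt_min (not_le.1 h1) hb
    exact MPlus.mono hf (by linarith) (min_le_min_right b hxy) ((min_le_right _ _).trans_lt hb1)

theorem cutoff_eq {n : ℕ} {f : ℝ → ℝ} (hf : f ∈ MPlus n) {b x : ℝ} (hx : -1 < x) (hxb : x ≤ b) :
    cutoff f b x = f x := by
  unfold cutoff
  split_ifs with h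
  · rw [hf.2 x hx h]
  · rw [min_eq_left hxb]

theorem exists_derivChain {n : ℕ} {f : ℝ → ℝ} (hf : f ∈ MPlus (n + 1)) {b : ℝ} (hb : 0 < b)
    (hb1 : b < 1) {ε : ℝ} (hε : 0 < ε) (hε1 : (n + 1) * ε < 1) :
    ∃ G, DerivChain (n + 1) b G ∧ (∀ x, G 0 x ≤ cutoff f b x) ∧
      ∀ x, cutoff f b (x - (n + 2) * ε) ≤ G 0 x := by
  have hm := cutoff_mono hf hb hb1
  have hi : ∀ a c, IntervalIntegrable (cutoff f b) volume a c := fun a c => hm.intervalIntegrable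
  have hz : ∀ x ≤ 0, cutoff f b x = 0 := fun x hx => by simp [cutoff, hx]
  have hc : Continuous (stek ε (cutoff f b)) := stek_continuous hi
  refine ⟨fun j => (bquot ε)^[j] ((stek ε)^[n + 1 - j] (stek ε (cutoff f b))),
    ⟨?_, ?_, ?_, ?_⟩, ?_, ?_⟩
  · intro j hj x
    have e : n + 1 - j = (n + 1 - (j + 1)) + 1 := by omega
    rw [e, Function.iterate_succ_apply' (stek ε)]
    have := hasDerivAt_bquot_iter (ε := ε) (fun x => hasDerivAt_stek (ε := ε)
      (stek_iter_continuous (ε := ε) hc (n + 1 - (j + 1))) x) j x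
    rw [← Function.iterate_succ_apply] at this
    exact this
  · exact bquot_iter_continuous (stek_iter_continuous hc _) _
  · intro j _ x hx
    refine bquot_iter_eq_zero hε (stek_iter_eq_zero hε (a := 0) ?_ _) _ x hx
    exact stek_iter_eq_zero hε hz 1
  · intro x hx
    simp only [Nat.sub_self, Function.iterate_zero, id_eq]
    rw [bquot_iter_stek hi]
    refine stek_nonneg hε fun t ht => ?_
    rcases le_or_gt t 0 with h0 | h0
    · rw [bquot_iter_eq_zero hε hz _ t h0]
    rw [bquot_iter_eq_fwdDiff]
    refine mul_nonneg (by positivity) ?_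
    have hcast : ((n + 1 : ℕ) : ℝ) * ε < 1 := by push_cast; exact hε1
    have h2 := hf.1.fwdDiff_iter_nonneg hε (y := t - (n + 1 : ℕ) * ε) (by linarith) (by linarith)
    rw [fwdDiff_iter_eq_sum_shift] at h2 ⊢
    refine h2.trans_eq (Finset.sum_congr rfl fun i hi => ?_)
    have hi' : (i : ℝ) ≤ (n + 1 : ℕ) := by exact_mod_cast Nat.lt_succ_iff.1 (Finset.mem_range.1 hi)
    have hi0 : (0 : ℝ) ≤ i := Nat.cast_nonneg i
    rw [cutoff_eq hf]
    · rw [nsmul_eq_mul]; nlinarith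
    · rw [nsmul_eq_mul]; nlinarith
  · intro x
    have := stek_iter_le hε hm (n + 2) x
    rwa [Function.iterate_succ_apply] at this
  · intro x
    have := le_stek_iter hε hm (n + 2) x
    rw [Function.iterate_succ_apply] at this
    push_cast at this
    exact this

theorem hasDerivAt_fwdDiff_iter {u u' : ℝ → ℝ} (h : ∀ x, HasDerivAt u (u' x) x) (η : ℝ) (j : ℕ)
    (x : ℝ) : HasDerivAt ((fwdDiff η)^[j] u) ((fwdDiff η)^[j] u' x) x := by
  induction j generalizing x with
  | zero => exact h x
  | succ j ih =>
    rw [Function.iterate_succ_apply', Function.iterate_succ_apply']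
    exact ((ih (x + η)).comp_add_const x η).sub (ih x)

theorem abs_fwdDiff_iter_le {n : ℕ} {G : ℕ → ℝ → ℝ}
    (hd : ∀ j < n + 1, ∀ x, HasDerivAt (G j) (G (j + 1) x) x) (hc : Continuous (G (n + 1)))
    {η : ℝ} (hη : 0 < η) (y : ℝ) :
    |(fwdDiff η)^[n + 1] (G 0) y| ≤ η ^ n * ∫ t in y..(y + (n + 1) * η), |G (n + 1) t| := by
  induction n generalizing G y with
  | zero =>
    simp only [zero_add, Function.iterate_one, fwdDiff, pow_zero, one_mul, Nat.cast_zero]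
    rw [← intervalIntegral.integral_eq_sub_of_hasDerivAt (fun x _ => hd 0 (by omega) x)
      (hc.intervalIntegrable _ _)]
    exact intervalIntegral.abs_integral_le_integral_abs (by linarith)
  | succ n ih =>
    have hder := hasDerivAt_fwdDiff_iter (hd 0 (by omega)) η (n + 1)
    obtain ⟨ξ, hξ, hξe⟩ := exists_hasDerivAt_eq_slope _ _ (show y < y + η by linarith)
      (fun x _ => (hder x).continuousAt.continuousWithinAt) (fun x _ => hder x)
    have e : (fwdDiff η)^[n + 1 + 1] (G 0) y = η * (fwdDiff η)^[n + 1] (G 1) ξ := by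
      rw [Function.iterate_succ_apply', fwdDiff, hξe, add_sub_cancel_left]
      field_simp
    have h1 := ih (G := fun j => G (j + 1)) (fun j hj x => hd (j + 1) (by omega) x) hc ξ
    rw [e, abs_mul, abs_of_pos hη, pow_succ', mul_assoc]
    refine mul_le_mul_of_nonneg_left (h1.trans ?_) hη.le
    refine mul_le_mul_of_nonneg_left ?_ (by positivity)
    have hn : (0 : ℝ) ≤ n := Nat.cast_nonneg n
    refine intervalIntegral.integral_mono_interval hξ.1.le (by nlinarith) ?_
      (Filter.Eventually.of_forall fun _ => abs_nonneg _) (hc.abs.intervalIntegrable _ _)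
    push_cast
    have := hξ.2
    linarith

namespace DerivChain

variable {k : ℕ} {b : ℝ} {G : ℕ → ℝ → ℝ}

theorem nonneg_of_le (hG : DerivChain k b G) {j : ℕ} (hj : j ≤ k) : ∀ x ≤ b, 0 ≤ G j x := by
  induction hj using Nat.decreasingInduction with
  | self => exact hG.nonneg
  | of_succ j hj ih =>
    intro x hx
    rcases le_or_gt x 0 with h0 | h0
    · rw [hG.zero j hj.le x h0]
    · rw [← hG.zero j hj.le 0 le_rfl]
      refine monotoneOn_of_hasDerivWithinAt_nonneg (convex_Iic b)
        (fun x _ => (hG.deriv j hj x).continuousAt.continuousWithinAt)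
        (fun x _ => (hG.deriv j hj x).hasDerivWithinAt) (fun y hy => ?_)
        (show (0 : ℝ) ∈ Iic b from h0.le.trans hx) hx h0.le
      exact ih y (show y ∈ Iic b from interior_subset hy)

theorem monotoneOn (hG : DerivChain k b G) {j : ℕ} (hj : j < k) : MonotoneOn (G j) (Iic b) :=
  monotoneOn_of_hasDerivWithinAt_nonneg (convex_Iic b)
    (fun x _ => (hG.deriv j hj x).continuousAt.continuousWithinAt)
    (fun x _ => (hG.deriv j hj x).hasDerivWithinAt)
    (fun y hy => hG.nonneg_of_le (Nat.succ_le_of_lt hj) y (show y ∈ Iic b from interior_subset hy))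

theorem pow_mul_le (hG : DerivChain k b G) {s x : ℝ} (hs : 0 < s) (hx : x ≤ b) {j : ℕ}
    (hj : j < k) : s ^ j * G j (x - j * s) ≤ G 0 x := by
  induction j with
  | zero => simp
  | succ j ih =>
    refine le_trans ?_ (ih (by omega))
    rw [pow_succ, mul_assoc]
    refine mul_le_mul_of_nonneg_left ?_ (by positivity)
    have hy : x - j * s ≤ b := by have : (0 : ℝ) ≤ j * s := by positivity
                                  linarith
    set y := x - j * s with hy'
    have e : x - ((j + 1 : ℕ) : ℝ) * s = y - s := by rw [hy']; push_cast; ring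
    rw [e]
    obtain ⟨ξ, hξ, hξe⟩ := exists_hasDerivAt_eq_slope (G j) (G (j + 1))
      (show y - s < y by linarith)
      (fun x _ => (hG.deriv j (by omega) x).continuousAt.continuousWithinAt)
      (fun x _ => hG.deriv j (by omega) x)
    have h1 : G (j + 1) (y - s) ≤ G (j + 1) ξ :=
      hG.monotoneOn hj (show y - s ∈ Iic b by simp; linarith)
        (show ξ ∈ Iic b by simp; linarith [hξ.2]) hξ.1.le
    have h2 : 0 ≤ G j (y - s) := hG.nonneg_of_le (by omega) _ (by linarith)
    rw [hξe, sub_sub_cancel, le_div_iff₀ hs] at h1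
    linarith

theorem pow_mul_integral_le {n : ℕ} (hG : DerivChain (n + 1) b G) {s x a c : ℝ} (hs : 0 < s)
    (hx : x ≤ b) (hac : a ≤ c) (hc : c ≤ x - n * s) :
    s ^ n * ∫ t in a..c, G (n + 1) t ≤ G 0 x := by
  refine le_trans ?_ (hG.pow_mul_le hs hx (Nat.lt_succ_self n))
  refine mul_le_mul_of_nonneg_left ?_ (by positivity)
  rw [intervalIntegral.integral_eq_sub_of_hasDerivAt
    (fun x _ => hG.deriv n (Nat.lt_succ_self n) x) (hG.cont.intervalIntegrable _ _)]
  have hb : x - n * s ≤ b := by have : (0 : ℝ) ≤ n * s := by positivity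
                                linarith
  have h1 := hG.monotoneOn (Nat.lt_succ_self n) (show c ∈ Iic b from hc.trans hb) hb hc
  have h2 := hG.nonneg_of_le (Nat.le_succ n) a (by linarith)
  linarith

end DerivChain

theorem rpow_le_of_comparable {a b c : ℝ} (ha : 0 < a) (hc : 1 ≤ c) (h1 : a ≤ c * b)
    (h2 : b ≤ c * a) (r : ℝ) : b ^ r ≤ c ^ |r| * a ^ r := by
  have hb : 0 < b := by
    by_contra h
    nlinarith [not_lt.1 h]
  have hc0 : 0 < c := by linarith
  rcases le_total 0 r with hr | hr
  · rw [abs_of_nonneg hr, ← Real.mul_rpow hc0.le ha.le]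
    exact Real.rpow_le_rpow hb.le h2 hr
  · rw [abs_of_nonpos hr, Real.rpow_neg hc0.le, ← Real.inv_rpow hc0.le,
      ← Real.mul_rpow (inv_nonneg.2 hc0.le) ha.le]
    refine Real.rpow_le_rpow_of_nonpos (by positivity) ?_ hr
    rwa [inv_mul_le_iff₀ hc0]

theorem measurable_jacobi (α β : ℝ) : Measurable (jacobi α β) := by
  unfold jacobi; fun_prop

theorem continuous_phiW : Continuous phiW := by
  unfold phiW; fun_prop

theorem phiW_nonneg (x : ℝ) : 0 ≤ phiW x := Real.sqrt_nonneg _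

theorem phiW_le_one (x : ℝ) : phiW x ≤ 1 := by
  unfold phiW; rw [Real.sqrt_le_left (by norm_num)]; nlinarith [sq_nonneg x]

theorem phiW_sq {x : ℝ} (h : x ∈ Icc (-1 : ℝ) 1) : phiW x ^ 2 = (1 - x) * (1 + x) := by
  unfold phiW; rw [Real.sq_sqrt (by nlinarith [h.1, h.2])]; ring

theorem jacobi_nonneg {α β x : ℝ} (h : x ∈ Icc (-1 : ℝ) 1) : 0 ≤ jacobi α β x :=
  mul_nonneg (Real.rpow_nonneg (by linarith [h.1]) _) (Real.rpow_nonneg (by linarith [h.2]) _)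

/-- On the main interval the half-width of the difference stencil is at most half the distance to
either endpoint. -/
theorem stencil_le {κ h x : ℝ}
    (hx : x ∈ Icc (-1 + 2 * κ ^ 2 * h ^ 2) (1 - 2 * κ ^ 2 * h ^ 2)) :
    κ * (h * phiW x) / 2 ≤ (1 - x) / 2 ∧ κ * (h * phiW x) / 2 ≤ (1 + x) / 2 := by
  have hm : 0 ≤ 2 * κ ^ 2 * h ^ 2 := by positivity
  have hx' : x ∈ Icc (-1 : ℝ) 1 := ⟨by linarith [hx.1], by linarith [hx.2]⟩
  have hsq := phiW_sq hx'
  have h1 := hx.1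
  have h2 := hx.2
  have h3 := hx'.1
  have h4 := hx'.2
  have e : (κ * (h * phiW x)) ^ 2 = κ ^ 2 * h ^ 2 * ((1 - x) * (1 + x)) := by
    rw [← hsq]; ring
  constructor
  · have : κ * (h * phiW x) ≤ 1 - x := by
      refine le_of_sq_le_sq ?_ (by linarith)
      rw [e]
      nlinarith [mul_nonneg (show 0 ≤ κ ^ 2 * h ^ 2 by positivity) (show 0 ≤ 1 - x by linarith),
        mul_nonneg (show 0 ≤ (1 - x) by linarith) (show 0 ≤ 1 - x - 2 * κ ^ 2 * h ^ 2 by linarith)]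
    linarith
  · have : κ * (h * phiW x) ≤ 1 + x := by
      refine le_of_sq_le_sq ?_ (by linarith)
      rw [e]
      nlinarith [mul_nonneg (show 0 ≤ κ ^ 2 * h ^ 2 by positivity) (show 0 ≤ 1 + x by linarith),
        mul_nonneg (show 0 ≤ (1 + x) by linarith) (show 0 ≤ 1 + x - 2 * κ ^ 2 * h ^ 2 by linarith)]
    linarith

theorem lintegral_lintegral_mul_swap {K : ℝ × ℝ → ℝ≥0∞} (hK : Measurable K) {d : ℝ → ℝ≥0∞}
    (hd : Measurable d) :
    ∫⁻ x, ∫⁻ t, K (x, t) * d t = ∫⁻ t, (∫⁻ x, K (x, t)) * d t := by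
  rw [lintegral_lintegral_swap]
  · refine lintegral_congr fun t => ?_
    rw [lintegral_mul_const _ (by fun_prop)]
  · exact (hK.mul (hd.comp measurable_snd)).aemeasurable

/-- The pairs `(x,t)` with `x` in the main interval and `t` in the stencil of `x`. -/
def stencilSet (κ h : ℝ) : Set (ℝ × ℝ) :=
  {z | z.1 ∈ Icc (-1 + 2 * κ ^ 2 * h ^ 2) (1 - 2 * κ ^ 2 * h ^ 2) ∧
    |z.2 - z.1| ≤ κ * (h * phiW z.1) / 2}

theorem measurableSet_stencilSet (κ h : ℝ) : MeasurableSet (stencilSet κ h) := by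
  have := continuous_phiW
  have e : stencilSet κ h = Prod.fst ⁻¹' Icc (-1 + 2 * κ ^ 2 * h ^ 2) (1 - 2 * κ ^ 2 * h ^ 2) ∩
      {z : ℝ × ℝ | |z.2 - z.1| ≤ κ * (h * phiW z.1) / 2} := rfl
  rw [e]
  exact ((isClosed_Icc.preimage continuous_fst).inter
    (isClosed_le (by fun_prop) (by fun_prop))).measurableSet

theorem sqrt_pow_eq_rpow {y : ℝ} (hy : 0 ≤ y) (k : ℕ) : √y ^ k = y ^ ((k : ℝ) / 2) := by
  rw [Real.sqrt_eq_rpow, ← Real.rpow_mul_natCast hy]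
  congr 1; ring

theorem lintegral_stencil_kernel_le (β : ℝ) (n : ℕ) {h t : ℝ} (hh : 0 < h)
    (hh2 : (n + 1) * h ≤ 1 / 2) (ht0 : 0 ≤ t) (ht1 : t < 1) :
    ∫⁻ x, (stencilSet (n + 1) h).indicator
        (fun z => ENNReal.ofReal (jacobi β β z.1 * (h * phiW z.1) ^ n)) (x, t) ≤
      ENNReal.ofReal (2 ^ |β| * 2 ^ |β| * 2 ^ n * (2 * (n + 1)) * h ^ (n + 1) *
        (1 - t) ^ (β + ((n + 1 : ℕ) : ℝ) / 2)) := by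
  set r : ℝ := (n + 1) * h * √(1 - t) with hr
  set M : ℝ := 2 ^ |β| * (2 ^ |β| * (1 - t) ^ β) * (h * (2 * √(1 - t))) ^ n with hM
  have ht' : 0 < 1 - t := by linarith
  have hM0 : 0 ≤ M := by positivity
  calc _ ≤ ∫⁻ x, (Icc (t - r) (t + r)).indicator (fun _ => ENNReal.ofReal M) x := by
        refine lintegral_mono fun x => ?_
        by_cases hxt : (x, t) ∈ stencilSet (n + 1) h
        swap
        · rw [indicator_of_notMem hxt]; exact zero_le
        rw [indicator_of_mem hxt]
        obtain ⟨hx, hd⟩ := hxt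
        simp only at hx hd
        obtain ⟨hs1, -⟩ := stencil_le hx
        have hφ1 := phiW_le_one x
        have hφ0 := phiW_nonneg x
        have hm : 0 ≤ 2 * (n + 1 : ℝ) ^ 2 * h ^ 2 := by positivity
        have hx' : x ∈ Icc (-1 : ℝ) 1 := ⟨by linarith [hx.1], by linarith [hx.2]⟩
        have hq : (n + 1) * (h * phiW x) / 2 ≤ 1 / 4 := by
          have : (n + 1) * h * phiW x ≤ 1 / 2 * 1 := mul_le_mul hh2 hφ1 hφ0 (by norm_num)
          linarith
        have hd' := abs_le.1 hd
        have hx14 : -1 / 4 ≤ x := by linarith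
        have hc1 : 1 - t ≤ 2 * (1 - x) := by linarith [hx'.2]
        have hc2 : 1 - x ≤ 2 * (1 - t) := by linarith [hx'.2]
        have hφ : phiW x ≤ 2 * √(1 - t) := by
          refine le_of_sq_le_sq ?_ (by positivity)
          rw [phiW_sq hx', mul_pow, Real.sq_sqrt ht'.le]
          nlinarith [hx'.1, hx'.2]
        have hxI : x ∈ Icc (t - r) (t + r) := by
          have : (n + 1) * (h * phiW x) / 2 ≤ r := by
            have : (n + 1) * h * phiW x ≤ (n + 1) * h * (2 * √(1 - t)) := by gcongr
            rw [hr]; linarith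
          exact ⟨by linarith, by linarith⟩
        rw [indicator_of_mem hxI]
        refine ENNReal.ofReal_le_ofReal ?_
        have hw : jacobi β β x ≤ 2 ^ |β| * (2 ^ |β| * (1 - t) ^ β) := by
          unfold jacobi
          refine mul_le_mul ?_ ?_ (Real.rpow_nonneg (by linarith [hx'.2]) _) (by positivity)
          · have := rpow_le_of_comparable (a := 1) (b := 1 + x) (c := 2) one_pos (by norm_num)
              (by linarith) (by linarith [hx'.2]) β
            simpa using this
          · exact rpow_le_of_comparable ht' (by norm_num) hc1 hc2 β
        rw [hM]
        refine mul_le_mul hw ?_ (by positivity) (by positivity)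
        gcongr
    _ = ENNReal.ofReal M * ENNReal.ofReal (2 * r) := by
        rw [lintegral_indicator measurableSet_Icc, setLIntegral_const, Real.volume_Icc]
        congr 2; ring
    _ = _ := by
        rw [← ENNReal.ofReal_mul hM0]
        congr 1
        rw [hM, hr, Real.rpow_add ht', ← sqrt_pow_eq_rpow ht'.le]
        ring

/-- The pairs `(x,t)` with `1 - t` between `2(1-x)` and `4(1-x)`. -/
def coneSet (B : ℝ) : Set (ℝ × ℝ) :=
  {z | z.1 ∈ Icc (1 / 2) B ∧ z.2 ∈ Icc (4 * z.1 - 3) (2 * z.1 - 1)}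

theorem measurableSet_coneSet (B : ℝ) : MeasurableSet (coneSet B) := by
  have e : coneSet B = Prod.fst ⁻¹' Icc (1 / 2) B ∩
      ({z : ℝ × ℝ | 4 * z.1 - 3 ≤ z.2} ∩ {z : ℝ × ℝ | z.2 ≤ 2 * z.1 - 1}) := rfl
  rw [e]
  exact ((isClosed_Icc.preimage continuous_fst).inter
    ((isClosed_le (by fun_prop) (by fun_prop)).inter
      (isClosed_le (by fun_prop) (by fun_prop)))).measurableSet

theorem le_lintegral_cone_kernel (γ : ℝ) {m t : ℝ} (hm : 0 < m) (ht0 : 0 ≤ t) (ht1 : t ≤ 1 - m) :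
    ENNReal.ofReal ((1 - t) ^ γ) ≤ ENNReal.ofReal (4 * 4 ^ |γ - 1|) *
      ∫⁻ x, (coneSet (1 - m / 4)).indicator
        (fun z => ENNReal.ofReal ((1 - z.1) ^ (γ - 1))) (x, t) := by
  have ht' : 0 < 1 - t := by linarith
  set M : ℝ := (4 ^ |γ - 1|)⁻¹ * (1 - t) ^ (γ - 1) with hM
  have hM0 : 0 ≤ M := by positivity
  have hlow : ENNReal.ofReal M * ENNReal.ofReal ((1 - t) / 4) ≤
      ∫⁻ x, (coneSet (1 - m / 4)).indicator
        (fun z => ENNReal.ofReal ((1 - z.1) ^ (γ - 1))) (x, t) := by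
    calc _ = ∫⁻ x, (Icc (1 - (1 - t) / 2) (1 - (1 - t) / 4)).indicator
          (fun _ => ENNReal.ofReal M) x := by
          rw [lintegral_indicator measurableSet_Icc, setLIntegral_const, Real.volume_Icc]
          congr 2; ring
      _ ≤ _ := by
          refine lintegral_mono fun x => ?_
          by_cases hx : x ∈ Icc (1 - (1 - t) / 2) (1 - (1 - t) / 4)
          swap
          · rw [indicator_of_notMem hx]; exact zero_le
          have hxt : (x, t) ∈ coneSet (1 - m / 4) :=
            ⟨⟨by simp only; linarith [hx.1], by simp only; linarith [hx.2]⟩,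
              ⟨by simp only; linarith [hx.2], by simp only; linarith [hx.1]⟩⟩
          rw [indicator_of_mem hx, indicator_of_mem hxt]
          refine ENNReal.ofReal_le_ofReal ?_
          simp only
          rw [hM, inv_mul_le_iff₀ (by positivity)]
          exact rpow_le_of_comparable (by linarith [hx.2]) (by norm_num) (by linarith [hx.1])
            (by linarith [hx.2]) _
  refine le_trans ?_ (mul_le_mul_right hlow _)
  rw [← ENNReal.ofReal_mul hM0, ← ENNReal.ofReal_mul (by positivity)]
  refine le_of_eq ?_
  congr 1
  have e : (1 - t) ^ γ = (1 - t) ^ (γ - 1) * (1 - t) := by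
    rw [← Real.rpow_add_one ht'.ne']; congr 1; ring
  rw [hM, e]
  field_simp

theorem DerivChain.lintegral_cone_le {n : ℕ} {B : ℝ} {G : ℕ → ℝ → ℝ} (hB : B < 1)
    (hG : DerivChain (n + 1) B G) (β x : ℝ) :
    ∫⁻ t, (coneSet B).indicator
        (fun z => ENNReal.ofReal ((1 - z.1) ^ (β + ((n + 1 : ℕ) : ℝ) / 2 - 1))) (x, t) *
          ENNReal.ofReal (G (n + 1) t) ≤
      (Icc 0 B).indicator (fun x => ENNReal.ofReal ((n + 1) ^ n *
        ((1 - x) ^ (β - ((n + 1 : ℕ) : ℝ) / 2) * G 0 x))) x := by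
  by_cases hx : x ∈ Icc (1 / 2) B
  swap
  · have : ∀ t, (x, t) ∉ coneSet B := fun t h => hx h.1
    simp [indicator_of_notMem (this _)]
  have hx1 : 0 < 1 - x := by linarith [hx.2]
  rw [indicator_of_mem (show x ∈ Icc 0 B from ⟨by linarith [hx.1], hx.2⟩)]
  have e : ∀ t, (coneSet B).indicator
      (fun z => ENNReal.ofReal ((1 - z.1) ^ (β + ((n + 1 : ℕ) : ℝ) / 2 - 1))) (x, t) *
          ENNReal.ofReal (G (n + 1) t) = (Icc (4 * x - 3) (2 * x - 1)).indicator (fun t =>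
        ENNReal.ofReal ((1 - x) ^ (β + ((n + 1 : ℕ) : ℝ) / 2 - 1)) *
          ENNReal.ofReal (G (n + 1) t)) t := by
    intro t
    by_cases ht : t ∈ Icc (4 * x - 3) (2 * x - 1)
    · rw [indicator_of_mem ht, indicator_of_mem (show (x, t) ∈ coneSet B from ⟨hx, ht⟩)]
    · rw [indicator_of_notMem ht, indicator_of_notMem (fun h => ht h.2), zero_mul]
  simp only [e]
  have hn : (0 : ℝ) < n + 1 := by positivity
  have hle : 4 * x - 3 ≤ 2 * x - 1 := by linarith
  rw [lintegral_indicator measurableSet_Icc, lintegral_const_mul _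
    (hG.cont.measurable.ennreal_ofReal), ← ofReal_integral_eq_lintegral_ofReal
    (hG.cont.integrableOn_Icc), ← ENNReal.ofReal_mul (by positivity)]
  · refine ENNReal.ofReal_le_ofReal ?_
    rw [integral_Icc_eq_integral_Ioc, ← intervalIntegral.integral_of_le hle]
    have h1 := hG.pow_mul_integral_le (s := (1 - x) / (n + 1)) (by positivity) hx.2 hle (by
      have : (n : ℝ) * ((1 - x) / (n + 1)) ≤ 1 - x := by
        rw [mul_div_assoc', div_le_iff₀ hn]; nlinarith
      linarith)
    have e2 : (1 - x) ^ (β + ((n + 1 : ℕ) : ℝ) / 2 - 1) =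
        (1 - x) ^ (β - ((n + 1 : ℕ) : ℝ) / 2) * (1 - x) ^ n := by
      rw [← Real.rpow_natCast, ← Real.rpow_add hx1]; congr 1; push_cast; ring
    have e3 : (1 - x) ^ n = (n + 1) ^ n * ((1 - x) / (n + 1)) ^ n := by
      rw [← mul_pow]; congr 1; field_simp
    rw [e2, e3]
    calc _ = (n + 1 : ℝ) ^ n * ((1 - x) ^ (β - ((n + 1 : ℕ) : ℝ) / 2) *
        (((1 - x) / (n + 1)) ^ n * ∫ t in (4 * x - 3)..(2 * x - 1), G (n + 1) t)) := by ring
      _ ≤ _ := by gcongr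
  · refine (ae_restrict_mem measurableSet_Icc).mono fun t ht => hG.nonneg t ?_
    linarith [ht.2, hx.2]

theorem DerivChain.enorm_symmDelta_le {n : ℕ} {h : ℝ} {G : ℕ → ℝ → ℝ} (hh : 0 < h)
    (hG : DerivChain (n + 1) (1 - (n + 1) ^ 2 * h ^ 2 / 4) G) (β : ℝ) {x : ℝ}
    (hx : x ∈ Icc (-1 + 2 * (n + 1 : ℝ) ^ 2 * h ^ 2) (1 - 2 * (n + 1 : ℝ) ^ 2 * h ^ 2)) :
    ‖jacobi β β x * symmDelta (n + 1) (h * phiW x) (G 0) x‖ₑ ≤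
      ∫⁻ t, (stencilSet (n + 1) h).indicator
        (fun z => ENNReal.ofReal (jacobi β β z.1 * (h * phiW z.1) ^ n)) (x, t) *
          ENNReal.ofReal (G (n + 1) t) := by
  obtain ⟨hs1, hs2⟩ := stencil_le hx
  have hn : (0 : ℝ) < n + 1 := by positivity
  have hm : 0 < (n + 1 : ℝ) ^ 2 * h ^ 2 := by positivity
  have hx1 : -1 < x := by linarith [hx.1]
  have hx2 : x < 1 := by linarith [hx.2]
  have hφ : 0 < phiW x := by unfold phiW; exact Real.sqrt_pos.2 (by nlinarith)
  set η := h * phiW x with hη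
  have hη0 : 0 < η := by positivity
  have hw := jacobi_nonneg (α := β) (β := β) ⟨hx1.le, hx2.le⟩
  have e : ∀ t, (stencilSet (n + 1) h).indicator
        (fun z => ENNReal.ofReal (jacobi β β z.1 * (h * phiW z.1) ^ n)) (x, t) *
          ENNReal.ofReal (G (n + 1) t) =
      (Icc (x - (n + 1) * η / 2) (x + (n + 1) * η / 2)).indicator (fun t =>
        ENNReal.ofReal (jacobi β β x * η ^ n) * ENNReal.ofReal (G (n + 1) t)) t := by
    intro t
    have hiff : (x, t) ∈ stencilSet (n + 1) h ↔
        t ∈ Icc (x - (n + 1) * η / 2) (x + (n + 1) * η / 2) := by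
      have : (x, t) ∈ stencilSet (n + 1) h ↔ |t - x| ≤ (n + 1) * η / 2 :=
        ⟨fun h => h.2, fun h => ⟨hx, h⟩⟩
      rw [this, abs_le, mem_Icc]
      constructor <;> rintro ⟨h1, h2⟩ <;> constructor <;> linarith
    by_cases ht : (x, t) ∈ stencilSet (n + 1) h
    · rw [indicator_of_mem ht, indicator_of_mem (hiff.1 ht)]
    · rw [indicator_of_notMem ht, indicator_of_notMem (fun h => ht (hiff.2 h)), zero_mul]
  simp only [e]
  have hp : 0 < (n + 1) * η / 2 := by positivity
  rw [lintegral_indicator measurableSet_Icc, lintegral_const_mul _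
    (hG.cont.measurable.ennreal_ofReal), ← ofReal_integral_eq_lintegral_ofReal
    (hG.cont.integrableOn_Icc), ← ENNReal.ofReal_mul (by positivity),
    Real.enorm_eq_ofReal_abs, abs_mul, abs_of_nonneg hw]
  · refine ENNReal.ofReal_le_ofReal ?_
    rw [mul_assoc]
    refine mul_le_mul_of_nonneg_left ?_ hw
    rw [symmDelta_eq_fwdDiff_iter]
    · have h1 := abs_fwdDiff_iter_le hG.deriv hG.cont hη0 (x - (n + 1 : ℕ) * η / 2)
      refine h1.trans (mul_le_mul_of_nonneg_left (le_of_eq ?_) (by positivity))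
      rw [integral_Icc_eq_integral_Ioc, ← intervalIntegral.integral_of_le (by linarith)]
      have e4 : x - ((n + 1 : ℕ) : ℝ) * η / 2 + (n + 1) * η = x + (n + 1) * η / 2 := by
        push_cast; ring
      rw [e4]
      push_cast
      refine intervalIntegral.integral_congr fun t ht => ?_
      rw [uIcc_of_le (by linarith)] at ht
      exact abs_of_nonneg (hG.nonneg t (by linarith [ht.2, hx.2]))
    · push_cast; exact ⟨by linarith, by linarith⟩
    · push_cast; exact ⟨by linarith, by linarith⟩
  · refine (ae_restrict_mem measurableSet_Icc).mono fun t ht => hG.nonneg t ?_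
    linarith [ht.2, hx.2]

theorem DerivChain.main_estimate (β : ℝ) (n : ℕ) : ∃ C : ℝ, 0 < C ∧ ∀ (h : ℝ) (G : ℕ → ℝ → ℝ),
    0 < h → (n + 1) * h ≤ 1 / 2 → DerivChain (n + 1) (1 - (n + 1) ^ 2 * h ^ 2 / 4) G →
    ∫⁻ x in Icc (-1 + 2 * (n + 1 : ℝ) ^ 2 * h ^ 2) (1 - 2 * (n + 1 : ℝ) ^ 2 * h ^ 2),
        ‖jacobi β β x * symmDelta (n + 1) (h * phiW x) (G 0) x‖ₑ ≤
      ENNReal.ofReal (C * h ^ (n + 1)) * ∫⁻ x in Icc 0 (1 - (n + 1 : ℝ) ^ 2 * h ^ 2 / 4),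
        ENNReal.ofReal ((1 - x) ^ (β - ((n + 1 : ℕ) : ℝ) / 2) * G 0 x) := by
  set γ : ℝ := β + ((n + 1 : ℕ) : ℝ) / 2 with hγ
  set C₁ : ℝ := 2 ^ |β| * 2 ^ |β| * 2 ^ n * (2 * (n + 1)) with hC₁
  set C₂ : ℝ := 4 * 4 ^ |γ - 1| with hC₂
  have hC₁0 : 0 < C₁ := by positivity
  have hC₂0 : 0 < C₂ := by positivity
  refine ⟨C₁ * C₂ * (n + 1) ^ n, by positivity, fun h G hh hh2 hG => ?_⟩
  set m : ℝ := (n + 1) ^ 2 * h ^ 2 with hm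
  have hm0 : 0 < m := by positivity
  set K₁ : ℝ × ℝ → ℝ≥0∞ := (stencilSet (n + 1) h).indicator
    (fun z => ENNReal.ofReal (jacobi β β z.1 * (h * phiW z.1) ^ n)) with hK₁
  set K₂ : ℝ × ℝ → ℝ≥0∞ := (coneSet (1 - m / 4)).indicator
    (fun z => ENNReal.ofReal ((1 - z.1) ^ (γ - 1))) with hK₂
  have hK₁m : Measurable K₁ := by
    refine Measurable.indicator ?_ (measurableSet_stencilSet _ _)
    have h1 := measurable_jacobi β β
    have h2 := continuous_phiW.measurable
    fun_prop
  have hK₂m : Measurable K₂ := by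
    refine Measurable.indicator ?_ (measurableSet_coneSet _)
    fun_prop
  have hdm : Measurable fun t => ENNReal.ofReal (G (n + 1) t) := hG.cont.measurable.ennreal_ofReal
  calc _ ≤ ∫⁻ x in Icc (-1 + 2 * (n + 1 : ℝ) ^ 2 * h ^ 2) (1 - 2 * (n + 1 : ℝ) ^ 2 * h ^ 2),
        ∫⁻ t, K₁ (x, t) * ENNReal.ofReal (G (n + 1) t) :=
        setLIntegral_mono' measurableSet_Icc fun x hx => hG.enorm_symmDelta_le hh β hx
    _ ≤ ∫⁻ x, ∫⁻ t, K₁ (x, t) * ENNReal.ofReal (G (n + 1) t) := setLIntegral_le_lintegral _ _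
    _ = ∫⁻ t, (∫⁻ x, K₁ (x, t)) * ENNReal.ofReal (G (n + 1) t) :=
        lintegral_lintegral_mul_swap hK₁m hdm
    _ ≤ ∫⁻ t, ENNReal.ofReal (C₁ * h ^ (n + 1) * C₂) *
        ((∫⁻ x, K₂ (x, t)) * ENNReal.ofReal (G (n + 1) t)) := by
        refine lintegral_mono fun t => ?_
        simp only
        rcases le_or_gt t 0 with ht0 | ht0
        · rw [hG.zero _ le_rfl t ht0]; simp
        rcases le_or_gt t (1 - m) with ht1 | ht1
        · rw [← mul_assoc]
          refine mul_le_mul_left ?_ _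
          have h1 := lintegral_stencil_kernel_le β n hh hh2 ht0.le (by linarith : t < 1)
          have h2 := le_lintegral_cone_kernel γ hm0 ht0.le ht1
          refine h1.trans ?_
          rw [ENNReal.ofReal_mul (by positivity), ENNReal.ofReal_mul (p := C₁ * h ^ (n + 1))
            (by positivity), mul_assoc (ENNReal.ofReal _)]
          exact mul_le_mul_right h2 _
        · have : ∀ x, (x, t) ∉ stencilSet (n + 1) h := by
            rintro x ⟨hx, hd⟩
            simp only at hx hd
            have := (stencil_le hx).1
            have := (abs_le.1 hd).2
            have := hx.2
            linarith
          simp [hK₁, indicator_of_notMem (this _)]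
    _ = ENNReal.ofReal (C₁ * h ^ (n + 1) * C₂) *
        ∫⁻ x, ∫⁻ t, K₂ (x, t) * ENNReal.ofReal (G (n + 1) t) := by
        rw [lintegral_const_mul, lintegral_lintegral_mul_swap hK₂m hdm]
        exact (Measurable.lintegral_prod_left' hK₂m).mul hdm
    _ ≤ ENNReal.ofReal (C₁ * h ^ (n + 1) * C₂) * ∫⁻ x, (Icc 0 (1 - m / 4)).indicator
        (fun x => ENNReal.ofReal ((n + 1) ^ n *
          ((1 - x) ^ (β - ((n + 1 : ℕ) : ℝ) / 2) * G 0 x))) x := by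
        refine mul_le_mul_right (lintegral_mono fun x => ?_) _
        exact hG.lintegral_cone_le (by linarith) β x
    _ = _ := by
        rw [lintegral_indicator measurableSet_Icc]
        have : ∀ x, ENNReal.ofReal ((n + 1) ^ n *
            ((1 - x) ^ (β - ((n + 1 : ℕ) : ℝ) / 2) * G 0 x)) = ENNReal.ofReal ((n + 1) ^ n) *
            ENNReal.ofReal ((1 - x) ^ (β - ((n + 1 : ℕ) : ℝ) / 2) * G 0 x) := fun x =>
          ENNReal.ofReal_mul (by positivity)
        simp only [this]
        have hG0 : Measurable (G 0) :=
          (continuous_iff_continuousAt.2 fun x =>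
            (hG.deriv 0 (by omega) x).continuousAt).measurable
        rw [lintegral_const_mul _ (by fun_prop), ← mul_assoc,
          ← ENNReal.ofReal_mul (by positivity)]
        congr 2
        ring

theorem countable_preimage_add_mul_phiW (c : ℝ) {D : Set ℝ} (hD : D.Countable) :
    {x : ℝ | x ∈ Icc (-1 : ℝ) 1 ∧ x + c * phiW x ∈ D}.Countable := by
  have hsub : {x : ℝ | x ∈ Icc (-1 : ℝ) 1 ∧ x + c * phiW x ∈ D} ⊆
      ⋃ y ∈ D, {(y + √(y ^ 2 - (1 + c ^ 2) * (y ^ 2 - c ^ 2))) / (1 + c ^ 2),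
        (y - √(y ^ 2 - (1 + c ^ 2) * (y ^ 2 - c ^ 2))) / (1 + c ^ 2)} := by
    rintro x ⟨hx, hxD⟩
    refine mem_biUnion hxD ?_
    set y := x + c * phiW x with hy
    have h1 : (y - x) ^ 2 = c ^ 2 * ((1 - x) * (1 + x)) := by
      rw [← phiW_sq hx, hy]; ring
    have h2 : y ^ 2 - (1 + c ^ 2) * (y ^ 2 - c ^ 2) = ((1 + c ^ 2) * x - y) ^ 2 := by
      linear_combination (-(1 + c ^ 2)) * h1
    have hc : (0 : ℝ) < 1 + c ^ 2 := by positivity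
    rw [h2, Real.sqrt_sq_eq_abs]
    rcases abs_choice ((1 + c ^ 2) * x - y) with h | h <;> rw [h]
    · left; field_simp; ring
    · right; rw [mem_singleton_iff]; field_simp; ring
  exact (hD.biUnion fun y _ => (Set.toFinite _).countable).mono hsub

theorem measurable_symmDelta (k : ℕ) (h : ℝ) {u : ℝ → ℝ} (hu : Continuous u) :
    Measurable fun x => symmDelta k (h * phiW x) u x := by
  have hφ := continuous_phiW
  unfold symmDelta
  refine Measurable.ite ?_ ?_ measurable_const
  · exact ((isClosed_Icc.preimage (f := fun x => x - k * (h * phiW x) / 2) (by fun_prop)).inter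
      (isClosed_Icc.preimage (f := fun x => x + k * (h * phiW x) / 2) (by fun_prop))).measurableSet
  · exact Continuous.measurable (by fun_prop)

theorem MPlus.main_estimate (β : ℝ) (n : ℕ) : ∃ C : ℝ, 0 < C ∧ ∀ (h : ℝ) (f : ℝ → ℝ),
    0 < h → (n + 1) * h ≤ 1 / 2 → f ∈ MPlus (n + 1) →
    ∫⁻ x in Icc (-1 + 2 * (n + 1 : ℝ) ^ 2 * h ^ 2) (1 - 2 * (n + 1 : ℝ) ^ 2 * h ^ 2),
        ‖jacobi β β x * symmDelta (n + 1) (h * phiW x) f x‖ₑ ≤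
      ENNReal.ofReal (C * h ^ (n + 1)) * ∫⁻ x in Icc 0 (1 - (n + 1 : ℝ) ^ 2 * h ^ 2 / 4),
        ENNReal.ofReal ((1 - x) ^ (β - ((n + 1 : ℕ) : ℝ) / 2) * f x) := by
  obtain ⟨C, hC, H⟩ := DerivChain.main_estimate β n
  refine ⟨C, hC, fun h f hh hh2 hf => ?_⟩
  set m : ℝ := (n + 1) ^ 2 * h ^ 2 with hm
  have hm0 : 0 < m := by positivity
  have hm1 : m ≤ 1 / 4 := by
    have : m = ((n + 1) * h) ^ 2 := by rw [hm]; ring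
    rw [this]
    have : 0 ≤ (n + 1) * h := by positivity
    nlinarith
  set b : ℝ := 1 - m / 4 with hb
  have hb0 : 0 < b := by linarith
  have hb1 : b < 1 := by linarith
  have hmono := cutoff_mono hf hb0 hb1
  have hn2 : (0 : ℝ) < n + 2 := by positivity
  have hεpos : ∀ j : ℕ, (0 : ℝ) < 1 / ((n + 2) * (j + 1)) := fun j => by positivity
  choose G hG hGle hleG using fun j : ℕ => exists_derivChain hf hb0 hb1 (hεpos j) (by
    rw [mul_one_div, div_lt_one (by positivity)]
    have : (0 : ℝ) ≤ j := Nat.cast_nonneg j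
    nlinarith)
  have hlim : ∀ y, -1 < y → y ≤ b → ContinuousAt (cutoff f b) y →
      Filter.Tendsto (fun j => G j 0 y) Filter.atTop (nhds (f y)) := by
    intro y hy1 hyb hyc
    rw [← cutoff_eq hf hy1 hyb]
    refine tendsto_of_tendsto_of_tendsto_of_le_of_le ?_ tendsto_const_nhds
      (fun j => hleG j y) (fun j => hGle j y)
    have h1 : Filter.Tendsto (fun j : ℕ => y - (n + 2) * (1 / ((n + 2) * ((j : ℝ) + 1))))
        Filter.atTop (nhds y) := by
      have h2 : Filter.Tendsto (fun j : ℕ => y - 1 / ((j : ℝ) + 1)) Filter.atTop (nhds (y - 0)) :=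
        tendsto_const_nhds.sub tendsto_one_div_add_atTop_nhds_zero_nat
      rw [sub_zero] at h2
      refine h2.congr fun j => ?_
      field_simp
    exact hyc.tendsto.comp h1
  set I : Set ℝ := Icc (-1 + 2 * (n + 1 : ℝ) ^ 2 * h ^ 2) (1 - 2 * (n + 1 : ℝ) ^ 2 * h ^ 2) with hI
  have hIsub : I ⊆ Icc (-1) 1 := fun x hx => by
    rw [hI] at hx
    have : 0 ≤ 2 * (n + 1 : ℝ) ^ 2 * h ^ 2 := by positivity
    exact ⟨by linarith [hx.1], by linarith [hx.2]⟩
  have hae : ∀ᵐ x ∂(volume.restrict I), ∀ i ∈ Finset.range (n + 1 + 1),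
      ContinuousAt (cutoff f b) (x + h * (i - (n + 1) / 2) * phiW x) := by
    rw [Finset.eventually_all]
    intro i _
    have hcount := countable_preimage_add_mul_phiW (h * (i - (n + 1) / 2))
      hmono.countable_not_continuousAt
    filter_upwards [ae_restrict_mem measurableSet_Icc,
      ae_restrict_of_ae (hcount.ae_notMem volume)] with x hx hx2
    by_contra hcon
    exact hx2 ⟨hIsub hx, hcon⟩
  have hconv : ∀ᵐ x ∂(volume.restrict I), Filter.Tendsto
      (fun j => ‖jacobi β β x * symmDelta (n + 1) (h * phiW x) (G j 0) x‖ₑ) Filter.atTop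
      (nhds ‖jacobi β β x * symmDelta (n + 1) (h * phiW x) f x‖ₑ) := by
    filter_upwards [hae, ae_restrict_mem measurableSet_Icc] with x hx hxI
    refine (Filter.Tendsto.const_mul _ ?_).enorm
    unfold symmDelta
    split_ifs
    swap
    · exact tendsto_const_nhds
    refine tendsto_finsetSum _ fun i hi => Filter.Tendsto.const_mul _ ?_
    obtain ⟨hs1, hs2⟩ := stencil_le hxI
    have hφ := phiW_nonneg x
    have hi1 : (i : ℝ) ≤ n + 1 := by
      exact_mod_cast Nat.lt_succ_iff.1 (Finset.mem_range.1 hi)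
    have hi0 : (0 : ℝ) ≤ i := Nat.cast_nonneg i
    have hη : 0 ≤ h * phiW x := by positivity
    have e : x - ((n + 1 : ℕ) : ℝ) * (h * phiW x) / 2 + i * (h * phiW x) =
        x + h * (i - (n + 1) / 2) * phiW x := by push_cast; ring
    have hiη : (i : ℝ) * (h * phiW x) ≤ (n + 1) * (h * phiW x) := by gcongr
    have hiη0 : 0 ≤ (i : ℝ) * (h * phiW x) := by positivity
    rw [hI] at hxI
    refine hlim _ ?_ ?_ (e ▸ hx i hi)
    · push_cast; nlinarith [hxI.1]
    · push_cast; nlinarith [hxI.2]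
  have hcont : ∀ j, Continuous (G j 0) := fun j => continuous_iff_continuousAt.2 fun x =>
    ((hG j).deriv 0 (by omega) x).continuousAt
  have hmeas : ∀ j, AEMeasurable
      (fun x => ‖jacobi β β x * symmDelta (n + 1) (h * phiW x) (G j 0) x‖ₑ)
      (volume.restrict I) := fun j =>
    (((measurable_jacobi β β).mul (measurable_symmDelta (n + 1) h (hcont j))).enorm).aemeasurable
  calc _ = ∫⁻ x in I, Filter.liminf
        (fun j => ‖jacobi β β x * symmDelta (n + 1) (h * phiW x) (G j 0) x‖ₑ) Filter.atTop :=
        lintegral_congr_ae (hconv.mono fun x hx => hx.liminf_eq.symm)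
    _ ≤ Filter.liminf (fun j => ∫⁻ x in I,
        ‖jacobi β β x * symmDelta (n + 1) (h * phiW x) (G j 0) x‖ₑ) Filter.atTop :=
        lintegral_liminf_le' hmeas
    _ ≤ Filter.liminf (fun _ : ℕ => ENNReal.ofReal (C * h ^ (n + 1)) * ∫⁻ x in Icc 0 b,
        ENNReal.ofReal ((1 - x) ^ (β - ((n + 1 : ℕ) : ℝ) / 2) * f x)) Filter.atTop := by
        refine Filter.liminf_le_liminf (Filter.Eventually.of_forall fun j => ?_)
        refine (H h (G j) hh hh2 (hG j)).trans (mul_le_mul_right ?_ _)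
        refine setLIntegral_mono' measurableSet_Icc fun x hx => ENNReal.ofReal_le_ofReal ?_
        refine mul_le_mul_of_nonneg_left ?_ (Real.rpow_nonneg (by linarith [hx.2]) _)
        rw [← cutoff_eq hf (by linarith [hx.1]) hx.2]
        exact hGle j x
    _ = _ := Filter.liminf_const _

theorem lintegral_one_sub_rpow (a : ℝ) {τ : ℝ} (hτ : 0 < τ) (hτ1 : τ ≤ 1) :
    ∫⁻ x in Icc 0 (1 - τ), ENNReal.ofReal ((1 - x) ^ a) =
      ENNReal.ofReal (∫ s in τ..1, s ^ a) := by
  have hc : ContinuousOn (fun x : ℝ => (1 - x) ^ a) (Icc 0 (1 - τ)) := by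
    refine ContinuousOn.rpow_const (by fun_prop) fun x hx => Or.inl ?_
    have := hx.2
    intro h; linarith
  rw [← ofReal_integral_eq_lintegral_ofReal (hc.integrableOn_compact isCompact_Icc)]
  · rw [integral_Icc_eq_integral_Ioc, ← intervalIntegral.integral_of_le (by linarith),
      intervalIntegral.integral_comp_sub_left (fun s => s ^ a)]
    simp
  · refine (ae_restrict_mem measurableSet_Icc).mono fun x hx => ?_
    exact Real.rpow_nonneg (by linarith [hx.2]) _

theorem eLpNorm_one_sub_rpow (κ : ℝ) {τ : ℝ} (hτ : 0 < τ) (hτ1 : τ ≤ 1) {q : ℝ≥0∞} (hq0 : q ≠ 0)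
    (hq : q ≠ ⊤) :
    eLpNorm (fun x : ℝ => (1 - x) ^ (-κ)) q (volume.restrict (Icc 0 (1 - τ))) =
      ENNReal.ofReal ((∫ s in τ..1, s ^ (-(κ * q.toReal))) ^ (1 / q.toReal)) := by
  have hqr : 0 < q.toReal := ENNReal.toReal_pos hq0 hq
  rw [eLpNorm_eq_lintegral_rpow_enorm_toReal hq0 hq]
  have e : ∫⁻ x in Icc 0 (1 - τ), ‖(1 - x) ^ (-κ)‖ₑ ^ q.toReal =
      ∫⁻ x in Icc 0 (1 - τ), ENNReal.ofReal ((1 - x) ^ (-(κ * q.toReal))) := by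
    refine setLIntegral_congr_fun measurableSet_Icc fun x hx => ?_
    have hx1 : 0 ≤ 1 - x := by linarith [hx.2]
    have h0 : 0 ≤ (1 - x) ^ (-κ) := Real.rpow_nonneg hx1 _
    rw [Real.enorm_eq_ofReal h0, ENNReal.ofReal_rpow_of_nonneg h0 hqr.le, ← Real.rpow_mul hx1,
      neg_mul]
  rw [e, lintegral_one_sub_rpow _ hτ hτ1, ENNReal.ofReal_rpow_of_nonneg _ (by positivity)]
  refine intervalIntegral.integral_nonneg hτ1 fun s hs => Real.rpow_nonneg ?_ _
  linarith [hs.1]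

theorem integral_rpow_neg_le_of_one_lt {a τ : ℝ} (ha : 1 < a) (hτ : 0 < τ) (hτ1 : τ ≤ 1) :
    ∫ s in τ..1, s ^ (-a) ≤ (a - 1)⁻¹ * τ ^ (1 - a) := by
  rw [integral_rpow (Or.inr ⟨by linarith, by rw [uIcc_of_le hτ1]; intro h; linarith [h.1]⟩)]
  have e : -a + 1 = 1 - a := by ring
  have h1 : 0 < a - 1 := by linarith
  rw [e, Real.one_rpow, ← neg_sub a 1, div_neg, ← neg_div, neg_sub, div_eq_inv_mul]
  have : 0 < (a - 1)⁻¹ := inv_pos.2 h1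
  nlinarith

theorem integral_rpow_neg_le_of_lt_one {a τ : ℝ} (ha : a < 1) (hτ : 0 < τ) :
    ∫ s in τ..1, s ^ (-a) ≤ (1 - a)⁻¹ := by
  rw [integral_rpow (Or.inl (by linarith))]
  have e : -a + 1 = 1 - a := by ring
  have h1 : 0 < 1 - a := by linarith
  rw [e, Real.one_rpow, div_eq_inv_mul]
  have : 0 < (1 - a)⁻¹ := inv_pos.2 h1
  have : 0 < τ ^ (1 - a) := by positivity
  nlinarith

theorem integral_rpow_neg_one {τ : ℝ} (hτ : 0 < τ) :
    ∫ s in τ..1, s ^ (-1 : ℝ) = -Real.log τ := by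
  simp only [Real.rpow_neg_one]
  rw [integral_inv_of_pos hτ one_pos, one_div, Real.log_inv]

theorem half_le_abs_log {δ : ℝ} (hδ : 0 < δ) (hδ1 : δ ≤ 1 / 2) : 1 / 2 ≤ |Real.log δ| := by
  have h1 : Real.log δ ≤ Real.log (1 / 2) := Real.log_le_log hδ hδ1
  rw [one_div, Real.log_inv] at h1
  have h2 := Real.log_two_gt_d9
  rw [abs_of_neg (by linarith)]
  linarith

theorem sq_mul_abs_log_le {h δ : ℝ} (hh : 0 < h) (hhδ : h ≤ δ) (hδ1 : δ ≤ 1 / 2) :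
    h ^ 2 * |Real.log h| ≤ 3 * (δ ^ 2 * |Real.log δ|) := by
  have hδ : 0 < δ := hh.trans_le hhδ
  have hL := half_le_abs_log hδ hδ1
  have e1 : |Real.log h| = -Real.log h := abs_of_neg (Real.log_neg hh (by linarith))
  have e2 : |Real.log δ| = -Real.log δ := abs_of_neg (Real.log_neg hδ (by linarith))
  have h1 : Real.log (δ / h) ≤ δ / h - 1 := Real.log_le_sub_one_of_pos (by positivity)
  rw [Real.log_div hδ.ne' hh.ne'] at h1
  rw [e2] at hL
  rw [e1, e2]
  have h2 : h ^ 2 * (-Real.log h) ≤ h ^ 2 * (-Real.log δ + δ / h) := by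
    refine mul_le_mul_of_nonneg_left ?_ (by positivity)
    linarith
  have h3 : h ^ 2 * (δ / h) = h * δ := by field_simp
  have h4 : h ^ 2 ≤ δ ^ 2 := by gcongr
  have h5 : h ^ 2 * (-Real.log δ) ≤ δ ^ 2 * (-Real.log δ) :=
    mul_le_mul_of_nonneg_right h4 (by linarith)
  have h6 : h * δ ≤ δ ^ 2 := by nlinarith
  have h7 : δ ^ 2 * (1 / 2) ≤ δ ^ 2 * (-Real.log δ) := mul_le_mul_of_nonneg_left hL (by positivity)
  rw [mul_add, h3] at h2
  linarith

theorem toReal_inv_add_toReal_inv {p q : ℝ≥0∞} [ENNReal.HolderConjugate p q] :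
    p.toReal⁻¹ + q.toReal⁻¹ = 1 := by
  have hp := ENNReal.HolderConjugate.ne_zero p q
  have hq := ENNReal.HolderConjugate.ne_zero q p
  have h := ENNReal.HolderConjugate.inv_add_inv_eq_one p q
  rw [← ENNReal.toReal_inv, ← ENNReal.toReal_inv, ← ENNReal.toReal_add (by simpa) (by simpa), h,
    ENNReal.toReal_one]

theorem rpow_le_two_mul_rateFn (k : ℕ) (p : ℝ≥0∞) {δ : ℝ} (hδ : 0 < δ)
    (hδ1 : δ ≤ 1 / 2) : δ ^ (2 - 2 / p.toReal) ≤ 2 * rateFn k p δ := by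
  have hL := half_le_abs_log hδ hδ1
  have hδ0 : 0 ≤ δ ^ (2 - 2 / p.toReal) := by positivity
  unfold rateFn
  split_ifs with h1 h2 h3
  · rw [h1.2]
    simp only [ENNReal.toReal_top, div_zero, sub_zero, Real.rpow_two]
    nlinarith [sq_nonneg δ]
  · rw [h2.2]
    have : (2 : ℝ) - 2 / (2 : ℝ≥0∞).toReal = 1 := by norm_num
    rw [this, Real.rpow_one]
    have : 1 / 2 ≤ √|Real.log δ| := by
      rw [Real.le_sqrt' (by norm_num)]; linarith
    nlinarith
  · have h4 : (1 : ℝ) ≤ 2 - 2 / p.toReal := by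
      rcases eq_or_ne p ⊤ with rfl | hpt
      · simp
      · have : (2 : ℝ) < p.toReal := by
          have := (ENNReal.toReal_lt_toReal (by simp) hpt).2 h3.2
          simpa using this
        have : 2 / p.toReal ≤ 1 := by rw [div_le_one (by linarith)]; linarith
        linarith
    have := Real.rpow_le_rpow_of_exponent_ge hδ (by linarith) h4
    rw [Real.rpow_one] at this
    linarith
  · linarith

theorem weight_norm_le_rateFn {k : ℕ} (hk : 1 ≤ k) (p q : ℝ≥0∞) [ENNReal.HolderConjugate p q]
    (hq : q ≠ ⊤) : ∃ C : ℝ, 0 < C ∧ ∀ h δ : ℝ, 0 < h → h ≤ δ → δ ≤ 1 / (2 * k) →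
      h ^ k * (∫ s in ((k : ℝ) ^ 2 * h ^ 2 / 4)..1, s ^ (-((k : ℝ) / 2 * q.toReal))) ^
        (1 / q.toReal) ≤ C * rateFn k p δ := by
  have hpq := toReal_inv_add_toReal_inv (p := p) (q := q)
  have hq1 : 1 ≤ q := ENNReal.HolderConjugate.one_le q p
  have hp1 : 1 ≤ p := ENNReal.HolderConjugate.one_le p q
  have hqr1 : 1 ≤ q.toReal := by
    have := (ENNReal.toReal_le_toReal (by simp) hq).2 hq1
    simpa using this
  set r := q.toReal with hr
  have hr0 : 0 < r := by linarith
  have hk0 : (0 : ℝ) < k := by exact_mod_cast hk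
  have hk1 : (1 : ℝ) ≤ k := by exact_mod_cast hk
  have hδk : ∀ δ : ℝ, δ ≤ 1 / (2 * k) → δ ≤ 1 / 2 := fun δ h => h.trans (by
    rw [div_le_div_iff₀ (by positivity) (by norm_num)]; linarith)
  have hτ : ∀ h δ : ℝ, 0 < h → h ≤ δ → δ ≤ 1 / (2 * k) →
      0 < (k : ℝ) ^ 2 * h ^ 2 / 4 ∧ (k : ℝ) ^ 2 * h ^ 2 / 4 ≤ 1 := by
    intro h δ hh hhδ hδ
    refine ⟨by positivity, ?_⟩
    have h1 : k * h ≤ 1 / 2 := by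
      have := hhδ.trans hδ
      rw [le_div_iff₀ (by positivity)] at this
      linarith
    have : 0 ≤ k * h := by positivity
    nlinarith
  have hexp : 2 - 2 / p.toReal = 2 / r := by
    rw [div_eq_mul_inv, div_eq_mul_inv]; linarith
  have hint0 : ∀ τ a : ℝ, 0 < τ → τ ≤ 1 → 0 ≤ ∫ s in τ..1, s ^ a := fun τ a h0 h1 =>
    intervalIntegral.integral_nonneg h1 fun s hs => Real.rpow_nonneg (by linarith [hs.1]) _
  rcases lt_trichotomy ((k : ℝ) / 2 * r) 1 with ha | ha | ha
  · -- `k = 1` and `2 < p`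
    have hkk : k = 1 := by
      have : (k : ℝ) < 2 := by nlinarith
      have : k < 2 := by exact_mod_cast this
      omega
    subst hkk
    have hr2 : r < 2 := by norm_num at ha; linarith
    have hp2 : 2 < p := by
      by_contra hcon
      have hpt : p ≠ ⊤ := fun h => hcon (h ▸ by simp)
      have h1 : p.toReal ≤ 2 := by
        have := (ENNReal.toReal_le_toReal hpt (by simp)).2 (not_lt.1 hcon)
        simpa using this
      have h2 : 0 < p.toReal := ENNReal.toReal_pos (one_pos.trans_le hp1).ne' hpt
      have h3 : (2 : ℝ)⁻¹ ≤ p.toReal⁻¹ := by gcongr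
      have h4 : (2 : ℝ)⁻¹ < r⁻¹ := by gcongr
      linarith
    have hrate : ∀ δ, rateFn 1 p δ = δ := by
      intro δ
      unfold rateFn
      rw [if_neg (by simp), if_neg (by rintro ⟨-, h⟩; exact hp2.ne' h), if_pos ⟨rfl, hp2⟩]
    set A : ℝ := (1 - ((1 : ℕ) : ℝ) / 2 * r)⁻¹
    have hA : 0 < A := inv_pos.2 (by linarith)
    refine ⟨A ^ (1 / r), by positivity, fun h δ hh hhδ hδ => ?_⟩
    obtain ⟨h0, h1⟩ := hτ h δ hh hhδ hδ
    rw [hrate, pow_one, mul_comm]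
    refine mul_le_mul ?_ hhδ hh.le (by positivity)
    refine Real.rpow_le_rpow (hint0 _ _ h0 h1) ?_ (by positivity)
    exact integral_rpow_neg_le_of_lt_one ha h0
  · -- the logarithmic cases
    have hkr : 1 / r = k / 2 := by field_simp; linarith
    have hkey : ∀ h δ : ℝ, 0 < h → h ≤ δ → δ ≤ 1 / (2 * k) →
        h ^ k * (∫ s in ((k : ℝ) ^ 2 * h ^ 2 / 4)..1, s ^ (-((k : ℝ) / 2 * r))) ^ (1 / r) ≤
          (12 * (δ ^ 2 * |Real.log δ|)) ^ ((k : ℝ) / 2) := by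
      intro h δ hh hhδ hδ
      obtain ⟨h0, h1⟩ := hτ h δ hh hhδ hδ
      rw [ha, integral_rpow_neg_one h0, hkr]
      have hlog : -Real.log ((k : ℝ) ^ 2 * h ^ 2 / 4) ≤ 4 * |Real.log h| := by
        have h2 : Real.log (h ^ 2 / 4) ≤ Real.log ((k : ℝ) ^ 2 * h ^ 2 / 4) := by
          refine Real.log_le_log (by positivity) ?_
          have : h ^ 2 ≤ (k : ℝ) ^ 2 * h ^ 2 := by
            have : (1 : ℝ) ≤ (k : ℝ) ^ 2 := by nlinarith
            nlinarith [sq_nonneg h]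
          linarith
        have hh2 := hhδ.trans (hδk δ hδ)
        have h3 : Real.log h ≤ Real.log (1 / 2) := Real.log_le_log hh hh2
        rw [one_div, Real.log_inv] at h3
        have h4 : Real.log (h ^ 2 / 4) = 2 * Real.log h - 2 * Real.log 2 := by
          rw [Real.log_div (by positivity) (by norm_num), Real.log_pow,
            (by norm_num : (4 : ℝ) = 2 ^ 2), Real.log_pow]
          push_cast; ring
        rw [abs_of_neg (Real.log_neg hh (by linarith))]
        linarith
      have hlog0 : 0 ≤ -Real.log ((k : ℝ) ^ 2 * h ^ 2 / 4) :=
        neg_nonneg.2 (Real.log_nonpos h0.le h1)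
      have e : h ^ k = (h ^ 2) ^ ((k : ℝ) / 2) := by
        rw [← Real.rpow_natCast h 2, ← Real.rpow_mul hh.le, ← Real.rpow_natCast]
        congr 1; push_cast; ring
      rw [e, ← Real.mul_rpow (by positivity) hlog0]
      refine Real.rpow_le_rpow (by positivity) ?_ (by positivity)
      have := sq_mul_abs_log_le hh hhδ (hδk δ hδ)
      have h5 : h ^ 2 * -Real.log ((k : ℝ) ^ 2 * h ^ 2 / 4) ≤ h ^ 2 * (4 * |Real.log h|) := by
        gcongr
      linarith
    have hkk : k = 1 ∨ k = 2 := by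
      have : (k : ℝ) ≤ 2 := by nlinarith
      have : k ≤ 2 := by exact_mod_cast this
      omega
    rcases hkk with rfl | rfl
    · have hr2 : r = 2 := by norm_num at ha; linarith
      have hp2 : p = 2 := by
        have : p.toReal⁻¹ = (2 : ℝ)⁻¹ := by rw [hr2] at hpq; linarith
        have h2 : p.toReal = 2 := inv_injective this
        have hpt : p ≠ ⊤ := fun h => by simp [h] at h2
        rw [← ENNReal.ofReal_toReal hpt, h2]; simp
      refine ⟨12 ^ ((1 : ℝ) / 2), by positivity, fun h δ hh hhδ hδ => ?_⟩
      refine (hkey h δ hh hhδ hδ).trans (le_of_eq ?_)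
      have hδ0 := hh.trans_le hhδ
      unfold rateFn
      rw [if_neg (by simp), if_pos ⟨rfl, hp2⟩, Nat.cast_one,
        Real.mul_rpow (by norm_num) (by positivity),
        Real.mul_rpow (by positivity) (by positivity), ← Real.sqrt_eq_rpow (δ ^ 2),
        ← Real.sqrt_eq_rpow |_|, Real.sqrt_sq hδ0.le]
    · have hr2 : r = 1 := by norm_num at ha; linarith
      have hp2 : p = ⊤ := by
        rw [ENNReal.HolderConjugate.eq_top_iff_eq_one p q, ← ENNReal.ofReal_toReal hq, ← hr, hr2]
        simp
      refine ⟨12, by norm_num, fun h δ hh hhδ hδ => ?_⟩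
      refine (hkey h δ hh hhδ hδ).trans (le_of_eq ?_)
      unfold rateFn
      rw [if_pos ⟨rfl, hp2⟩]
      norm_num
  · -- the power case
    have hrate : ∀ δ, rateFn k p δ = δ ^ (2 / r) := by
      intro δ
      unfold rateFn
      rw [if_neg, if_neg, if_neg, hexp]
      · rintro ⟨rfl, hp2⟩
        have h1 : p.toReal⁻¹ < 2⁻¹ := by
          rcases eq_or_ne p ⊤ with rfl | hpt
          · simp
          · have : (2 : ℝ) < p.toReal := by
              have := (ENNReal.toReal_lt_toReal (by simp) hpt).2 hp2
              simpa using this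
            gcongr
        have h2 : r⁻¹ < 2⁻¹ := by
          gcongr; norm_num at ha; linarith
        linarith
      · rintro ⟨rfl, rfl⟩
        have : r⁻¹ = 2⁻¹ := by
          have : ((2 : ℝ≥0∞).toReal)⁻¹ = (2 : ℝ)⁻¹ := by norm_num
          rw [this] at hpq; linarith
        rw [inv_injective this] at ha; norm_num at ha
      · rintro ⟨rfl, rfl⟩
        have : r⁻¹ = 1⁻¹ := by simpa using hpq
        rw [inv_injective this] at ha; norm_num at ha
    set a : ℝ := (k : ℝ) / 2 * r with ha'
    refine ⟨((a - 1)⁻¹ * ((k : ℝ) ^ 2 / 4) ^ (1 - a)) ^ (1 / r), ?_, fun h δ hh hhδ hδ => ?_⟩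
    · have : 0 < a - 1 := by linarith
      positivity
    obtain ⟨h0, h1⟩ := hτ h δ hh hhδ hδ
    have ha1 : 0 < (a - 1)⁻¹ := inv_pos.2 (by linarith)
    rw [hrate]
    calc _ ≤ h ^ k * ((a - 1)⁻¹ * ((k : ℝ) ^ 2 * h ^ 2 / 4) ^ (1 - a)) ^ (1 / r) := by
          refine mul_le_mul_of_nonneg_left ?_ (by positivity)
          refine Real.rpow_le_rpow (hint0 _ _ h0 h1) ?_ (by positivity)
          exact integral_rpow_neg_le_of_one_lt ha h0 h1
      _ = ((a - 1)⁻¹ * ((k : ℝ) ^ 2 / 4) ^ (1 - a)) ^ (1 / r) * h ^ (2 / r) := by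
          have e1 : (k : ℝ) ^ 2 * h ^ 2 / 4 = (k : ℝ) ^ 2 / 4 * h ^ 2 := by ring
          rw [e1, Real.mul_rpow (y := h ^ 2) (by positivity) (by positivity),
            ← mul_assoc (a - 1)⁻¹, Real.mul_rpow (y := (h ^ 2) ^ (1 - a)) (by positivity)
            (by positivity), mul_left_comm]
          congr 1
          rw [← Real.rpow_natCast h 2, ← Real.rpow_natCast h k, ← Real.rpow_mul hh.le,
            ← Real.rpow_mul hh.le, ← Real.rpow_add hh]
          congr 1
          rw [ha']
          push_cast
          field_simp
          ring
      _ ≤ _ := by gcongr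

theorem aestronglyMeasurable_jacobi_mul {p : ℝ≥0∞} {β : ℝ} {f : ℝ → ℝ} (hf : f ∈ WSet p β β)
    {a b : ℝ} (ha : -1 ≤ a) (hb : b ≤ 1) :
    AEStronglyMeasurable (fun x => jacobi β β x * f x) (volume.restrict (Icc a b)) := by
  have h1 : AEMeasurable f (volume.restrict (Icc a b)) :=
    hf.1.mono_measure (Measure.restrict_mono (Icc_subset_Icc ha hb) le_rfl)
  exact ((measurable_jacobi β β).aemeasurable.mul h1).aestronglyMeasurable

theorem eLpNorm_restrict_le_LpOn (g : ℝ → ℝ) (p : ℝ≥0∞) {a b : ℝ} (ha : -1 ≤ a) (hb : b ≤ 1) :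
    eLpNorm g p (volume.restrict (Icc a b)) ≤ LpOn g p (-1) 1 :=
  eLpNorm_mono_measure _ (Measure.restrict_mono (Icc_subset_Icc ha hb) le_rfl)

theorem lintegral_enorm_jacobi_mul_le {p : ℝ≥0∞} (hp : 1 ≤ p) {β : ℝ} {f : ℝ → ℝ}
    (hf : f ∈ WSet p β β) {a b : ℝ} (ha : -1 ≤ a) (hb : b ≤ 1) :
    ∫⁻ x in Icc a b, ‖jacobi β β x * f x‖ₑ ≤
      LpOn (fun x => jacobi β β x * f x) p (-1) 1 *
        ENNReal.ofReal (b - a) ^ (1 - 1 / p.toReal) := by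
  have h := eLpNorm_le_eLpNorm_mul_rpow_measure_univ hp
    (aestronglyMeasurable_jacobi_mul hf ha hb)
  rw [eLpNorm_one_eq_lintegral_enorm, Measure.restrict_apply_univ, Real.volume_Icc] at h
  simp only [ENNReal.toReal_one, div_one] at h
  exact h.trans (mul_le_mul_left (eLpNorm_restrict_le_LpOn _ p ha hb) _)

theorem lintegral_one_sub_rpow_mul_le {p q : ℝ≥0∞} [ENNReal.HolderConjugate p q] {β : ℝ}
    {f : ℝ → ℝ} (hf : f ∈ WSet p β β) (κ : ℝ) {τ : ℝ} (hτ : 0 < τ) :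
    ∫⁻ x in Icc 0 (1 - τ), ENNReal.ofReal ((1 - x) ^ (β - κ) * f x) ≤
      ENNReal.ofReal (2 ^ |β|) *
        (eLpNorm (fun x : ℝ => (1 - x) ^ (-κ)) q (volume.restrict (Icc 0 (1 - τ))) *
          LpOn (fun x => jacobi β β x * f x) p (-1) 1) := by
  calc _ ≤ ∫⁻ x in Icc 0 (1 - τ), ENNReal.ofReal (2 ^ |β|) *
        ‖((fun x : ℝ => (1 - x) ^ (-κ)) • (fun x => jacobi β β x * f x)) x‖ₑ := by
        refine setLIntegral_mono' measurableSet_Icc fun x hx => ?_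
        have hx1 : 0 < 1 - x := by linarith [hx.2]
        have hx0 : 0 < 1 + x := by linarith [hx.1]
        rw [Real.enorm_eq_ofReal_abs, ← ENNReal.ofReal_mul (by positivity)]
        refine ENNReal.ofReal_le_ofReal ?_
        have h1 : (1 : ℝ) ≤ 2 ^ |β| * (1 + x) ^ β := by
          have := rpow_le_of_comparable (b := 1) hx0 (c := 2) (by norm_num) (by linarith)
            (by linarith [hx.1]) β
          simpa using this
        have e : (1 - x) ^ (β - κ) = (1 - x) ^ (-κ) * (1 - x) ^ β := by
          rw [← Real.rpow_add hx1]; congr 1; ring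
        have h2 : |((fun x : ℝ => (1 - x) ^ (-κ)) • (fun x => jacobi β β x * f x)) x| =
            (1 - x) ^ (-κ) * ((1 + x) ^ β * (1 - x) ^ β * |f x|) := by
          simp only [Pi.smul_apply', smul_eq_mul, jacobi]
          rw [abs_mul, abs_mul, abs_mul, abs_of_nonneg (Real.rpow_nonneg hx1.le _),
            abs_of_nonneg (Real.rpow_nonneg hx1.le _), abs_of_nonneg (Real.rpow_nonneg hx0.le _)]
        rw [h2, e]
        calc (1 - x) ^ (-κ) * (1 - x) ^ β * f x ≤ (1 - x) ^ (-κ) * (1 - x) ^ β * |f x| := by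
              gcongr; exact le_abs_self _
          _ = 1 * ((1 - x) ^ (-κ) * (1 - x) ^ β * |f x|) := by ring
          _ ≤ (2 ^ |β| * (1 + x) ^ β) * ((1 - x) ^ (-κ) * (1 - x) ^ β * |f x|) := by gcongr
          _ = _ := by ring
    _ = ENNReal.ofReal (2 ^ |β|) * eLpNorm
        ((fun x : ℝ => (1 - x) ^ (-κ)) • (fun x => jacobi β β x * f x)) 1
        (volume.restrict (Icc 0 (1 - τ))) := by
        rw [lintegral_const_mul' _ _ ENNReal.ofReal_ne_top, eLpNorm_one_eq_lintegral_enorm]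
    _ ≤ _ := by
        refine mul_le_mul_right ?_ _
        refine (eLpNorm_smul_le_mul_eLpNorm (p := q) (q := p) (r := 1)
          (aestronglyMeasurable_jacobi_mul hf (by norm_num) (by linarith)) ?_).trans ?_
        · have : Measurable fun x : ℝ => (1 - x) ^ (-κ) := by fun_prop
          exact this.aestronglyMeasurable
        · exact mul_le_mul_right (eLpNorm_restrict_le_LpOn _ p (by norm_num) (by linarith)) _

theorem pow_mul_eLpNorm_le_rateFn {k : ℕ} (hk : 1 ≤ k) (p q : ℝ≥0∞)
    [ENNReal.HolderConjugate p q] : ∃ C : ℝ, 0 < C ∧ ∀ h δ : ℝ, 0 < h → h ≤ δ →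
      δ ≤ 1 / (2 * k) →
      ENNReal.ofReal (h ^ k) * eLpNorm (fun x : ℝ => (1 - x) ^ (-((k : ℝ) / 2))) q
        (volume.restrict (Icc 0 (1 - (k : ℝ) ^ 2 * h ^ 2 / 4))) ≤
          ENNReal.ofReal (C * rateFn k p δ) := by
  have hk0 : (0 : ℝ) < k := by exact_mod_cast hk
  have hk1 : (1 : ℝ) ≤ k := by exact_mod_cast hk
  rcases eq_or_ne q ⊤ with hq | hq
  · have hp : p = 1 := (ENNReal.HolderConjugate.eq_top_iff_eq_one q p).1 hq
    subst hp hq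
    refine ⟨2 ^ k, by positivity, fun h δ hh hhδ hδ => ?_⟩
    have hrate : rateFn k 1 δ = 1 := by
      unfold rateFn
      rw [if_neg (by simp), if_neg (by simp), if_neg (by simp)]
      norm_num
    set τ : ℝ := (k : ℝ) ^ 2 * h ^ 2 / 4 with hτ
    have hτ0 : 0 < τ := by positivity
    have hb : ∀ᵐ x ∂(volume.restrict (Icc 0 (1 - τ))),
        ‖(1 - x) ^ (-((k : ℝ) / 2))‖ ≤ τ ^ (-((k : ℝ) / 2)) := by
      refine (ae_restrict_mem measurableSet_Icc).mono fun x hx => ?_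
      have hx1 : τ ≤ 1 - x := by linarith [hx.2]
      rw [Real.norm_of_nonneg (Real.rpow_nonneg (by linarith) _)]
      exact Real.rpow_le_rpow_of_nonpos hτ0 hx1 (by linarith)
    have h1 := eLpNorm_le_of_ae_bound (p := ⊤) hb
    simp only [ENNReal.toReal_top, inv_zero, ENNReal.rpow_zero, one_mul] at h1
    refine (mul_le_mul_right h1 _).trans ?_
    rw [← ENNReal.ofReal_mul (by positivity), hrate, mul_one]
    refine ENNReal.ofReal_le_ofReal ?_
    have e : √τ = k * h / 2 := by
      rw [hτ, show (k : ℝ) ^ 2 * h ^ 2 / 4 = (k * h / 2) ^ 2 by ring]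
      exact Real.sqrt_sq (by positivity)
    rw [Real.rpow_neg hτ0.le, ← sqrt_pow_eq_rpow hτ0.le, e, ← div_eq_mul_inv, ← div_pow]
    refine pow_le_pow_left₀ (by positivity) ?_ _
    rw [div_le_iff₀ (by positivity)]
    nlinarith
  · obtain ⟨C, hC, H⟩ := weight_norm_le_rateFn hk p q hq
    refine ⟨C, hC, fun h δ hh hhδ hδ => ?_⟩
    have h1 : k * h ≤ 1 / 2 := by
      have := hhδ.trans hδ
      rw [le_div_iff₀ (by positivity)] at this
      linarith
    have h2 : 0 ≤ k * h := by positivity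
    rw [eLpNorm_one_sub_rpow _ (by positivity) (by nlinarith)
      (ENNReal.HolderConjugate.ne_zero q p) hq, ← ENNReal.ofReal_mul (by positivity)]
    exact ENNReal.ofReal_le_ofReal (H h δ hh hhδ hδ)

theorem OmegaMain_le (n : ℕ) (β : ℝ) (p : ℝ≥0∞) (hp : 1 ≤ p) : ∃ C : ℝ, 0 < C ∧
    ∀ f ∈ MPlus (n + 1) ∩ WSet p β β, ∀ δ : ℝ, 0 < δ → δ ≤ 1 / (2 * ((n + 1 : ℕ) : ℝ)) →
      OmegaMain (n + 1) f δ (jacobi β β) 1 ≤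
        ENNReal.ofReal C * LpOn (fun x => jacobi β β x * f x) p (-1) 1 *
          ENNReal.ofReal (rateFn (n + 1) p δ) := by
  have := ENNReal.HolderConjugate.conjExponent hp
  set q := ENNReal.conjExponent p
  obtain ⟨C₁, hC₁, H₁⟩ := MPlus.main_estimate β n
  obtain ⟨C₂, hC₂, H₂⟩ := pow_mul_eLpNorm_le_rateFn (k := n + 1) (by omega) p q
  refine ⟨C₁ * 2 ^ |β| * C₂, by positivity, fun f hf δ hδ hδ1 => iSup₂_le fun h hh => ?_⟩
  have hn : (0 : ℝ) < n + 1 := by positivity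
  have hhn : (n + 1) * h ≤ 1 / 2 := by
    have := hh.2.trans hδ1
    push_cast at this
    rw [le_div_iff₀ (by positivity)] at this
    linarith
  have h1 := H₁ h f hh.1 hhn hf.1
  have h2 := lintegral_one_sub_rpow_mul_le (q := q) hf.2 (((n + 1 : ℕ) : ℝ) / 2)
    (τ := (n + 1 : ℝ) ^ 2 * h ^ 2 / 4) (by have := hh.1; positivity)
  have h3 := H₂ h δ hh.1 hh.2 hδ1
  rw [LpOn, eLpNorm_one_eq_lintegral_enorm]
  push_cast at h1 h2 h3 ⊢
  refine h1.trans ((mul_le_mul_right h2 _).trans ?_)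
  have hpow : 0 ≤ h ^ (n + 1) := by have := hh.1; positivity
  rw [ENNReal.ofReal_mul hC₁.le, ENNReal.ofReal_mul (p := C₁ * 2 ^ |β|) (by positivity),
    ENNReal.ofReal_mul hC₁.le]
  rw [ENNReal.ofReal_mul hC₂.le] at h3
  set N := LpOn (fun x => jacobi β β x * f x) p (-1) 1
  set E := eLpNorm (fun x : ℝ => (1 - x) ^ (-(((n : ℝ) + 1) / 2))) q
    (volume.restrict (Icc 0 (1 - ((n : ℝ) + 1) ^ 2 * h ^ 2 / 4)))
  calc _ = ENNReal.ofReal C₁ * ENNReal.ofReal (2 ^ |β|) * N *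
        (ENNReal.ofReal (h ^ (n + 1)) * E) := by ring
    _ ≤ ENNReal.ofReal C₁ * ENNReal.ofReal (2 ^ |β|) * N *
        (ENNReal.ofReal C₂ * ENNReal.ofReal (rateFn (n + 1) p δ)) := mul_le_mul_right h3 _
    _ = _ := by ring

theorem abs_symmDelta_le {k : ℕ} {η x M : ℝ} {f : ℝ → ℝ} (hM : 0 ≤ M)
    (H : x - k * η / 2 ∈ Icc (-1 : ℝ) 1 → ∀ i ∈ Finset.range (k + 1),
      |f (x - k * η / 2 + i * η)| ≤ M) : |symmDelta k η f x| ≤ 2 ^ k * M := by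
  unfold symmDelta
  split_ifs with h
  · calc _ ≤ ∑ i ∈ Finset.range (k + 1),
          |(k.choose i : ℝ) * (-1 : ℝ) ^ (k - i) * f (x - k * η / 2 + i * η)| :=
          Finset.abs_sum_le_sum_abs _ _
      _ ≤ ∑ i ∈ Finset.range (k + 1), (k.choose i : ℝ) * M := by
          refine Finset.sum_le_sum fun i hi => ?_
          rw [abs_mul, abs_mul, abs_pow, abs_neg, abs_one, one_pow, mul_one, Nat.abs_cast]
          exact mul_le_mul_of_nonneg_left (H h.1 i hi) (Nat.cast_nonneg _)
      _ = 2 ^ k * M := by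
          rw [← Finset.sum_mul]
          congr 1
          exact_mod_cast Nat.sum_range_choose k
  · rw [abs_zero]; positivity

theorem OmegaBwd_le (n : ℕ) (β : ℝ) (p : ℝ≥0∞) (hp : 1 ≤ p) : ∃ C : ℝ, 0 < C ∧
    ∀ f ∈ MPlus (n + 1) ∩ WSet p β β, ∀ δ : ℝ, 0 < δ → δ ≤ 1 / (2 * ((n + 1 : ℕ) : ℝ)) →
      OmegaBwd (n + 1) f δ (jacobi β β) 1 ≤
        ENNReal.ofReal C * LpOn (fun x => jacobi β β x * f x) p (-1) 1 *
          ENNReal.ofReal (rateFn (n + 1) p δ) := by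
  set e : ℝ := 1 - 1 / p.toReal with he
  have he0 : 0 ≤ e := by
    rcases eq_or_ne p ⊤ with rfl | hpt
    · simp [he]
    · have : 1 ≤ p.toReal := by
        have := (ENNReal.toReal_le_toReal (by simp) hpt).2 hp
        simpa using this
      rw [he, sub_nonneg, div_le_one (by linarith)]; exact this
  refine ⟨2 ^ (n + 1) * (2 * ((n + 1 : ℕ) : ℝ) ^ 2) ^ e * 2, by positivity,
    fun f hf δ hδ hδ1 => iSup₂_le fun h hh => ?_⟩
  set κ : ℝ := ((n + 1 : ℕ) : ℝ) with hκ
  have hκ0 : 0 < κ := by rw [hκ]; positivity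
  have hκ1 : 1 ≤ κ := by rw [hκ]; push_cast; linarith [(Nat.cast_nonneg n : (0 : ℝ) ≤ n)]
  have hκδ : κ * δ ≤ 1 / 2 := by
    rw [le_div_iff₀ (by positivity)] at hδ1
    linarith
  have hδ2 : δ ≤ 1 / 2 := by nlinarith
  have hm : 2 * κ ^ 2 * δ ^ 2 ≤ 1 / 2 := by
    have : 0 ≤ κ * δ := by positivity
    nlinarith
  have hm0 : 0 < 2 * κ ^ 2 * δ ^ 2 := by positivity
  rw [LpOn, eLpNorm_one_eq_lintegral_enorm]
  have hae : ∀ᵐ x ∂(volume.restrict (Icc (1 - 2 * κ ^ 2 * δ ^ 2) 1)),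
      ‖jacobi β β x * symmDelta (n + 1) h f (x - κ * h / 2)‖ₑ ≤
        ENNReal.ofReal (2 ^ (n + 1)) * ‖jacobi β β x * f x‖ₑ := by
    filter_upwards [ae_restrict_mem measurableSet_Icc,
      ae_restrict_of_ae (Measure.ae_ne volume (1 : ℝ)),
      ae_restrict_of_ae (Measure.ae_ne volume (-1 + κ * h))] with x hx hx1 hx2
    have hxlt : x < 1 := lt_of_le_of_ne hx.2 hx1
    have hxgt : -1 < x := by linarith [hx.1]
    have hfx : 0 ≤ f x := MPlus.nonneg hf.1 hxgt hxlt
    have hb : |symmDelta (n + 1) h f (x - κ * h / 2)| ≤ 2 ^ (n + 1) * f x := by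
      refine abs_symmDelta_le hfx fun hmem i hi => ?_
      rw [← hκ] at hmem ⊢
      have hi1 : (i : ℝ) ≤ κ := by
        rw [hκ]; exact_mod_cast Nat.lt_succ_iff.1 (Finset.mem_range.1 hi)
      have hiη : (i : ℝ) * h ≤ κ * h := mul_le_mul_of_nonneg_right hi1 hh.1.le
      have hiη0 : 0 ≤ (i : ℝ) * h := mul_nonneg (Nat.cast_nonneg i) hh.1.le
      have hlow : -1 < x - κ * h := by
        refine lt_of_le_of_ne (by linarith [hmem.1]) fun h => hx2 (by linarith)
      rw [abs_of_nonneg (MPlus.nonneg hf.1 (by linarith) (by linarith))]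
      exact MPlus.mono hf.1 (by linarith) (by linarith) hxlt
    rw [Real.enorm_eq_ofReal_abs, Real.enorm_eq_ofReal_abs, ← ENNReal.ofReal_mul (by positivity),
      abs_mul, abs_mul, abs_of_nonneg hfx]
    refine ENNReal.ofReal_le_ofReal ?_
    calc _ ≤ |jacobi β β x| * (2 ^ (n + 1) * f x) := mul_le_mul_of_nonneg_left hb (abs_nonneg _)
      _ = _ := by ring
  refine (lintegral_mono_ae hae).trans ?_
  rw [lintegral_const_mul' _ _ ENNReal.ofReal_ne_top]
  refine (mul_le_mul_right (lintegral_enorm_jacobi_mul_le hp hf.2 (by linarith) le_rfl) _).trans ?_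
  rw [sub_sub_cancel, ENNReal.ofReal_rpow_of_nonneg hm0.le he0]
  have hr := rpow_le_two_mul_rateFn (n + 1) p hδ hδ2
  have hpow : (2 * κ ^ 2 * δ ^ 2) ^ e ≤ (2 * κ ^ 2) ^ e * (2 * rateFn (n + 1) p δ) := by
    rw [Real.mul_rpow (by positivity) (by positivity)]
    refine mul_le_mul_of_nonneg_left ?_ (by positivity)
    refine le_trans (le_of_eq ?_) hr
    rw [← Real.rpow_natCast δ 2, ← Real.rpow_mul hδ.le, he]
    congr 1
    push_cast
    ring
  set N := LpOn (fun x => jacobi β β x * f x) p (-1) 1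
  calc _ ≤ ENNReal.ofReal (2 ^ (n + 1)) * (N * ENNReal.ofReal
        ((2 * κ ^ 2) ^ e * (2 * rateFn (n + 1) p δ))) := by
        gcongr
    _ = _ := by
        rw [ENNReal.ofReal_mul (by positivity), ENNReal.ofReal_mul (by positivity),
          ENNReal.ofReal_mul (by positivity), ENNReal.ofReal_mul (by positivity)]
        ring

theorem exists_lintegral_jacobi_le (β : ℝ) {b : ℝ} (hb : 1 / 2 ≤ b) (hb1 : b < 1) :
    ∃ c : ℝ, 0 < c ∧ ∫⁻ x in Icc (-1) (-1 / 2), ‖jacobi β β x‖ₑ ≤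
      ENNReal.ofReal c * ∫⁻ x in Icc b 1, ‖jacobi β β x‖ₑ := by
  set A := ∫⁻ x in Icc b 1, ‖jacobi β β x‖ₑ with hA
  set B := ∫⁻ x in Icc (1 / 2) b, ‖jacobi β β x‖ₑ with hB
  have hrefl : ∫⁻ x in Icc (-1) (-1 / 2), ‖jacobi β β x‖ₑ =
      ∫⁻ x in Icc (1 / 2) 1, ‖jacobi β β x‖ₑ := by
    have h := (Measure.measurePreserving_neg (volume : Measure ℝ)).setLIntegral_comp_preimage
      (s := Icc (1 / 2) 1) (f := fun x => ‖jacobi β β x‖ₑ) measurableSet_Icc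
      (measurable_jacobi β β).enorm
    rw [← h]
    have e1 : (Neg.neg : ℝ → ℝ) ⁻¹' Icc (1 / 2) 1 = Icc (-1) (-1 / 2) := by
      ext x
      simp only [mem_preimage, mem_Icc]
      constructor <;> rintro ⟨h1, h2⟩ <;> constructor <;> linarith
    rw [e1]
    refine lintegral_congr fun x => ?_
    congr 1
    unfold jacobi
    rw [mul_comm, sub_neg_eq_add, ← sub_eq_add_neg]
  have hle : ∫⁻ x in Icc (-1) (-1 / 2), ‖jacobi β β x‖ₑ ≤ B + A := by
    rw [hrefl, ← Icc_union_Icc_eq_Icc hb hb1.le]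
    exact lintegral_union_le _ _ _
  have hBtop : B ≠ ⊤ := by
    have hc : ContinuousOn (jacobi β β) (Icc (1 / 2) b) := by
      unfold jacobi
      refine ContinuousOn.mul (ContinuousOn.rpow_const (by fun_prop) fun x hx => Or.inl ?_)
        (ContinuousOn.rpow_const (by fun_prop) fun x hx => Or.inl ?_)
      · have := hx.1; intro h; linarith
      · have := hx.2; intro h; linarith
    exact (hc.integrableOn_compact isCompact_Icc).hasFiniteIntegral.ne
  have hA0 : A ≠ 0 := by
    intro h0
    rw [hA, lintegral_eq_zero_iff (measurable_jacobi β β).enorm] at h0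
    have h1 : ∀ᵐ x ∂(volume.restrict (Ioo b 1)), ‖jacobi β β x‖ₑ = 0 :=
      ae_restrict_of_ae_restrict_of_subset Ioo_subset_Icc_self h0
    have h2 : ∀ᵐ x ∂(volume.restrict (Ioo b 1)), False := by
      filter_upwards [h1, ae_restrict_mem measurableSet_Ioo] with x hx hxI
      have hpos : 0 < jacobi β β x :=
        mul_pos (Real.rpow_pos_of_pos (by linarith [hxI.1]) _)
          (Real.rpow_pos_of_pos (by linarith [hxI.2]) _)
      exact hpos.ne' (enorm_eq_zero.1 hx)
    rw [Filter.eventually_false_iff_eq_bot, ae_eq_bot, Measure.restrict_eq_zero,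
      Real.volume_Ioo, ENNReal.ofReal_eq_zero] at h2
    linarith
  rcases eq_or_ne A ⊤ with hAt | hAt
  · exact ⟨1, one_pos, by rw [hAt]; simp⟩
  · refine ⟨(B / A).toReal + 1, by positivity, hle.trans (le_of_eq ?_)⟩
    rw [ENNReal.ofReal_add (by positivity) one_pos.le, ENNReal.ofReal_toReal
      (ENNReal.div_ne_top hBtop hA0), ENNReal.ofReal_one, add_mul, one_mul,
      ENNReal.div_mul_cancel hA0 hAt]

theorem OmegaFwd_le (n : ℕ) (β : ℝ) (p : ℝ≥0∞) (hp : 1 ≤ p) {δ₀ : ℝ}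
    (hδ₀ : δ₀ ≤ 1 / (2 * ((n + 1 : ℕ) : ℝ)))
    (hδ₀' : ((n + 1 : ℕ) : ℝ) ^ 2 * (((n + 1 : ℕ) : ℝ) + 1) * δ₀ ^ 2 < 1) :
    ∃ C : ℝ, 0 < C ∧
    ∀ f ∈ MPlus (n + 1) ∩ WSet p β β, ∀ δ : ℝ, 0 < δ → δ ≤ δ₀ →
      OmegaFwd (n + 1) f δ (jacobi β β) 1 ≤
        ENNReal.ofReal C * LpOn (fun x => jacobi β β x * f x) p (-1) 1 *
          ENNReal.ofReal (rateFn (n + 1) p δ) := by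
  set κ : ℝ := ((n + 1 : ℕ) : ℝ) with hκ
  have hκ0 : 0 < κ := by rw [hκ]; positivity
  have hκ1 : 1 ≤ κ := by rw [hκ]; push_cast; linarith [(Nat.cast_nonneg n : (0 : ℝ) ≤ n)]
  set b : ℝ := max (1 / 2) (-1 + 2 * (κ ^ 2 * (κ + 1) * δ₀ ^ 2)) with hb
  have hb2 : 1 / 2 ≤ b := le_max_left _ _
  have hb1 : b < 1 := max_lt (by norm_num) (by linarith)
  obtain ⟨c, hc, Hc⟩ := exists_lintegral_jacobi_le β hb2 hb1
  have he0 : 0 ≤ 1 - 1 / p.toReal := by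
    rcases eq_or_ne p ⊤ with rfl | hpt
    · simp
    · have : 1 ≤ p.toReal := by
        have := (ENNReal.toReal_le_toReal (by simp) hpt).2 hp
        simpa using this
      rw [sub_nonneg, div_le_one (by linarith)]; exact this
  refine ⟨2 ^ (n + 1) * c * (4 * κ ^ 2 * (κ + 1)), by positivity,
    fun f hf δ hδ hδ1 => iSup₂_le fun h hh => ?_⟩
  have hδ1' : κ * δ ≤ 1 / 2 := by
    have := hδ1.trans hδ₀
    rw [le_div_iff₀ (by positivity)] at this
    linarith
  have hδ2 : δ ≤ 1 / 2 := by nlinarith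
  have hm : 2 * κ ^ 2 * δ ^ 2 ≤ 1 / 2 := by
    have : 0 ≤ κ * δ := by positivity
    nlinarith
  have hm0 : 0 < 2 * κ ^ 2 * δ ^ 2 := by positivity
  have hδδ : δ ^ 2 ≤ δ₀ ^ 2 := by gcongr
  have hnode : ∀ x ≤ -1 + 2 * κ ^ 2 * δ ^ 2, ∀ i ∈ Finset.range (n + 1 + 1),
      x + i * h ≤ -1 + 2 * (κ ^ 2 * (κ + 1) * δ ^ 2) ∧ 0 ≤ (i : ℝ) * h := by
    intro x hx i hi
    have hi1 : (i : ℝ) ≤ κ := by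
      rw [hκ]; exact_mod_cast Nat.lt_succ_iff.1 (Finset.mem_range.1 hi)
    have hi2 : (i : ℝ) * h ≤ κ * (2 * κ ^ 2 * δ ^ 2) := mul_le_mul hi1 hh.2 hh.1.le hκ0.le
    exact ⟨by linarith, mul_nonneg (Nat.cast_nonneg i) hh.1.le⟩
  have hcenter : ∀ x : ℝ, ∀ i : ℕ, x + κ * h / 2 - κ * h / 2 + i * h = x + i * h := fun x i => by
    ring
  rw [LpOn, eLpNorm_one_eq_lintegral_enorm]
  rcases le_or_gt (2 * (κ ^ 2 * (κ + 1) * δ ^ 2)) 1 with hsmall | hlarge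
  · -- the stencils stay in `(-1,0]`
    have : ∀ᵐ x ∂(volume.restrict (Icc (-1) (-1 + 2 * κ ^ 2 * δ ^ 2))),
        ‖jacobi β β x * symmDelta (n + 1) h f (x + κ * h / 2)‖ₑ = 0 := by
      filter_upwards [ae_restrict_mem measurableSet_Icc,
        ae_restrict_of_ae (Measure.ae_ne volume (-1 : ℝ))] with x hx hx1
      have hxgt : -1 < x := lt_of_le_of_ne hx.1 (Ne.symm hx1)
      have hb : |symmDelta (n + 1) h f (x + κ * h / 2)| ≤ 2 ^ (n + 1) * 0 := by
        refine abs_symmDelta_le le_rfl fun _ i hi => ?_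
        rw [← hκ, hcenter]
        obtain ⟨h1, h2⟩ := hnode x hx.2 i hi
        rw [hf.1.2 _ (by linarith) (by linarith), abs_zero]
      rw [mul_zero] at hb
      rw [abs_eq_zero.1 (le_antisymm hb (abs_nonneg _))]
      simp
    rw [lintegral_congr_ae this]
    simp
  have hfb : 0 ≤ f b := MPlus.nonneg hf.1 (by linarith) hb1
  have hae : ∀ᵐ x ∂(volume.restrict (Icc (-1) (-1 + 2 * κ ^ 2 * δ ^ 2))),
      ‖jacobi β β x * symmDelta (n + 1) h f (x + κ * h / 2)‖ₑ ≤
        ENNReal.ofReal (2 ^ (n + 1) * f b) * ‖jacobi β β x‖ₑ := by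
    filter_upwards [ae_restrict_mem measurableSet_Icc,
      ae_restrict_of_ae (Measure.ae_ne volume (-1 : ℝ))] with x hx hx1
    have hxgt : -1 < x := lt_of_le_of_ne hx.1 (Ne.symm hx1)
    have hbd : |symmDelta (n + 1) h f (x + κ * h / 2)| ≤ 2 ^ (n + 1) * f b := by
      refine abs_symmDelta_le hfb fun _ i hi => ?_
      rw [← hκ, hcenter]
      obtain ⟨h1, h2⟩ := hnode x hx.2 i hi
      have h3 : -1 + 2 * (κ ^ 2 * (κ + 1) * δ ^ 2) ≤ b := by
        refine le_trans ?_ (le_max_right _ _)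
        gcongr
      rw [abs_of_nonneg (MPlus.nonneg hf.1 (by linarith) (by linarith))]
      exact MPlus.mono hf.1 (by linarith) (by linarith) hb1
    rw [Real.enorm_eq_ofReal_abs, Real.enorm_eq_ofReal_abs, ← ENNReal.ofReal_mul (by positivity),
      abs_mul, mul_comm]
    exact ENNReal.ofReal_le_ofReal (mul_le_mul_of_nonneg_right hbd (abs_nonneg _))
  set N := LpOn (fun x => jacobi β β x * f x) p (-1) 1 with hN
  have hfA : ENNReal.ofReal (f b) * ∫⁻ x in Icc b 1, ‖jacobi β β x‖ₑ ≤ N := by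
    rw [← lintegral_const_mul' _ _ ENNReal.ofReal_ne_top]
    have h1 : ∀ᵐ x ∂(volume.restrict (Icc b 1)),
        ENNReal.ofReal (f b) * ‖jacobi β β x‖ₑ ≤ ‖jacobi β β x * f x‖ₑ := by
      filter_upwards [ae_restrict_mem measurableSet_Icc,
        ae_restrict_of_ae (Measure.ae_ne volume (1 : ℝ))] with x hx hx1
      have hxlt : x < 1 := lt_of_le_of_ne hx.2 hx1
      have hm := MPlus.mono hf.1 (by linarith : -1 < b) hx.1 hxlt
      rw [Real.enorm_eq_ofReal_abs, Real.enorm_eq_ofReal_abs, ← ENNReal.ofReal_mul hfb, abs_mul,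
        abs_of_nonneg (hfb.trans hm), mul_comm]
      exact ENNReal.ofReal_le_ofReal (mul_le_mul_of_nonneg_left hm (abs_nonneg _))
    refine (lintegral_mono_ae h1).trans ?_
    refine (lintegral_enorm_jacobi_mul_le hp hf.2 (by linarith) le_rfl).trans ?_
    rw [← hN]
    refine mul_le_of_le_one_right zero_le ?_
    refine ENNReal.rpow_le_one ?_ he0
    rw [ENNReal.ofReal_le_one]
    linarith
  have hrate : 1 ≤ 4 * κ ^ 2 * (κ + 1) * rateFn (n + 1) p δ := by
    have hr := rpow_le_two_mul_rateFn (n + 1) p hδ hδ2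
    have h1 : δ ^ (2 : ℝ) ≤ δ ^ (2 - 2 / p.toReal) :=
      Real.rpow_le_rpow_of_exponent_ge hδ (by linarith) (by
        have : 0 ≤ 2 / p.toReal := by positivity
        linarith)
    rw [Real.rpow_two] at h1
    have h2 : 0 < 2 * (κ ^ 2 * (κ + 1)) := by positivity
    have h3 := mul_le_mul_of_nonneg_left (h1.trans hr) h2.le
    linarith
  calc _ ≤ ∫⁻ x in Icc (-1) (-1 + 2 * κ ^ 2 * δ ^ 2),
        ENNReal.ofReal (2 ^ (n + 1) * f b) * ‖jacobi β β x‖ₑ := lintegral_mono_ae hae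
    _ ≤ ∫⁻ x in Icc (-1) (-1 / 2), ENNReal.ofReal (2 ^ (n + 1) * f b) * ‖jacobi β β x‖ₑ :=
        lintegral_mono_set (Icc_subset_Icc le_rfl (by linarith))
    _ = ENNReal.ofReal (2 ^ (n + 1) * f b) * ∫⁻ x in Icc (-1) (-1 / 2), ‖jacobi β β x‖ₑ :=
        lintegral_const_mul' _ _ ENNReal.ofReal_ne_top
    _ ≤ ENNReal.ofReal (2 ^ (n + 1) * f b) *
        (ENNReal.ofReal c * ∫⁻ x in Icc b 1, ‖jacobi β β x‖ₑ) := mul_le_mul_right Hc _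
    _ = ENNReal.ofReal (2 ^ (n + 1)) * ENNReal.ofReal c *
        (ENNReal.ofReal (f b) * ∫⁻ x in Icc b 1, ‖jacobi β β x‖ₑ) := by
        rw [ENNReal.ofReal_mul (by positivity)]; ring
    _ ≤ ENNReal.ofReal (2 ^ (n + 1)) * ENNReal.ofReal c * N := mul_le_mul_right hfA _
    _ ≤ ENNReal.ofReal (2 ^ (n + 1)) * ENNReal.ofReal c * N *
        ENNReal.ofReal (4 * κ ^ 2 * (κ + 1) * rateFn (n + 1) p δ) := by
        refine le_mul_of_one_le_right zero_le ?_
        rw [ENNReal.one_le_ofReal]; exact hrate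
    _ = _ := by
        rw [ENNReal.ofReal_mul (q := rateFn _ _ _) (by positivity),
          ENNReal.ofReal_mul (p := 2 ^ (n + 1) * c) (by positivity),
          ENNReal.ofReal_mul (p := 2 ^ (n + 1)) (by positivity)]
        ring

theorem statement12 (k : ℕ) (hk : 1 ≤ k) (β : ℝ) (p : ℝ≥0∞) (hp : 1 ≤ p)
    (δ₀ : ℝ) (hδ₀ : δ₀ ≤ 1 / (2 * (k : ℝ))) (hδ₀' : δ₀ < 1 / ((k : ℝ) * Real.sqrt (k + 1))) :
    ∃ c : ℝ, 0 < c ∧ ∀ f : ℝ → ℝ, f ∈ MPlus k ∩ WSet p β β →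
      ∀ δ : ℝ, 0 < δ → δ ≤ δ₀ →
        omegaDT k f δ (jacobi β β) 1 ≤
          ENNReal.ofReal c * LpOn (fun x => jacobi β β x * f x) p (-1) 1 *
            ENNReal.ofReal (rateFn k p δ) := by
  obtain ⟨n, rfl⟩ : ∃ n, k = n + 1 := ⟨k - 1, by omega⟩
  rcases le_or_gt δ₀ 0 with hneg | hpos
  · exact ⟨1, one_pos, fun f _ δ hδ hδ1 => absurd (hδ.trans_le hδ1) (not_lt.2 hneg)⟩
  have hsq : ((n + 1 : ℕ) : ℝ) ^ 2 * (((n + 1 : ℕ) : ℝ) + 1) * δ₀ ^ 2 < 1 := by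
    set κ : ℝ := ((n + 1 : ℕ) : ℝ) with hκ
    have hκ0 : 0 < κ := by rw [hκ]; positivity
    have hs : √(κ + 1) ^ 2 = κ + 1 := Real.sq_sqrt (by linarith)
    have h1 : δ₀ * (κ * √(κ + 1)) < 1 := by rwa [lt_div_iff₀ (by positivity)] at hδ₀'
    have h2 : (δ₀ * (κ * √(κ + 1))) ^ 2 < 1 := by
      rw [sq_lt_one_iff₀ (by positivity)]; exact h1
    rw [mul_pow, mul_pow, hs] at h2
    linarith
  obtain ⟨C₁, hC₁, H₁⟩ := OmegaMain_le n β p hp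
  obtain ⟨C₂, hC₂, H₂⟩ := OmegaFwd_le n β p hp hδ₀ hsq
  obtain ⟨C₃, hC₃, H₃⟩ := OmegaBwd_le n β p hp
  refine ⟨C₁ + C₂ + C₃, by positivity, fun f hf δ hδ hδ1 => ?_⟩
  rw [omegaDT, ENNReal.ofReal_add (by positivity) hC₃.le, ENNReal.ofReal_add hC₁.le hC₂.le,
    add_mul, add_mul, add_mul, add_mul]
  exact add_le_add (add_le_add (H₁ f hf δ hδ (hδ1.trans hδ₀)) (H₂ f hf δ hδ hδ1))
    (H₃ f hf δ hδ (hδ1.trans hδ₀))
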